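/- If C is a permutation class containing only finitely many simple permutations, then for any finite set B₁ of blocked permutations and any finite set B₂ of barred permutations, the generating function of the set of permutations in C that avoid every element of B₁ and every element of B₂ is algebraic over ℚ[x]. -/

import Mathlib

/-- A permutation of length `n`. -/
abbrev Perm (n : ℕ) := Equiv.Perm (Fin n)

/-- `σ` is contained in `π`: there is a strictly increasing sequence of indices of `π`
on which `π` is order isomorphic to `σ`. -/
def Contains {m n : ℕ} (σ : Perm m) (π : Perm n) : Prop :=
  ∃ f : Fin m → Fin n, StrictMono f ∧ ∀ s t : Fin m, π (f s) < π (f t) ↔ σ s < σ t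

/-- A permutation class: a downset in the containment order. -/
def IsPermClass (C : ∀ n, Set (Perm n)) : Prop :=
  ∀ ⦃m n : ℕ⦄ (σ : Perm m) (π : Perm n), π ∈ C n → Contains σ π → σ ∈ C m

/-- A set of contiguous values. -/
def IsRange {n : ℕ} (I : Finset (Fin n)) : Prop :=
  ∀ ⦃i j l : Fin n⦄, i ∈ I → l ∈ I → i ≤ j → j ≤ l → j ∈ I

/-- An interval of `π`: a set of contiguous indices mapped to a set of contiguous values. -/
def IsPermInterval {n : ℕ} (π : Perm n) (I : Finset (Fin n)) : Prop :=
  IsRange I ∧ IsRange (I.image π)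

/-- A permutation is simple if its only intervals have size `0`, `1`, or `n`. -/
def IsSimple {n : ℕ} (π : Perm n) : Prop :=
  ∀ I : Finset (Fin n), IsPermInterval π I → I.card ≤ 1 ∨ I.card = n

/-- The set of simple permutations belonging to the class `C` is finite. -/
def FinitelyManySimples (C : ∀ n, Set (Perm n)) : Prop :=
  {p : Σ n : ℕ, Perm n | p.2 ∈ C p.1 ∧ IsSimple p.2}.Finite

/-- The generating function `∑_{n ≥ 1} |S_n| xⁿ` of a set of permutations. -/
noncomputable def genFun (S : ∀ n, Set (Perm n)) : PowerSeries ℚ :=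
  PowerSeries.mk fun n => if n = 0 then 0 else (Nat.card (S n) : ℚ)

/-- A power series `f` is algebraic over `ℚ[x]` if there is a nonzero polynomial
`P(x,y) ∈ ℚ[x][y]` with `P(x,f) = 0`. -/
def IsAlgebraicOverQx (f : PowerSeries ℚ) : Prop :=
  ∃ P : Polynomial (Polynomial ℚ), P ≠ 0 ∧
    Polynomial.eval₂ Polynomial.coeToPowerSeries.ringHom f P = 0

/-- `π` contains the blocked permutation `(σ, D)`:  a copy of `σ` in `π` in which, for
each `s ∈ D` (`1`-based, with `1 ≤ s ≤ k-1`), the `s`-th and `(s+1)`-st chosen indices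
are adjacent.  (Indices of `f` are `0`-based, so the constraint for `s ∈ D` relates the
chosen indices numbered `s - 1` and `s`.) -/
def ContainsBlocked {n k : ℕ} (π : Perm n) (σ : Perm k) (D : Set ℕ) : Prop :=
  ∃ f : Fin k → Fin n, StrictMono f ∧ (∀ s t : Fin k, π (f s) < π (f t) ↔ σ s < σ t) ∧
    ∀ (s : ℕ) (_ : s ∈ D) (h1 : 1 ≤ s) (h2 : s < k),
      (f ⟨s, h2⟩ : ℕ) = (f ⟨s - 1, by omega⟩ : ℕ) + 1

/-- `π` avoids the barred permutation `(σ, S)` (`S` is the set of barred positions):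
every copy in `π` of the pattern of `σ` on the unbarred positions extends to a copy
of `σ` itself. -/
def AvoidsBarred {n k : ℕ} (π : Perm n) (σ : Perm k) (S : Set (Fin k)) : Prop :=
  ∀ e : {s : Fin k // s ∉ S} → Fin n, StrictMono e →
    (∀ s t : {s : Fin k // s ∉ S}, π (e s) < π (e t) ↔ σ s.1 < σ t.1) →
    ∃ f : Fin k → Fin n, StrictMono f ∧ (∀ s t : Fin k, π (f s) < π (f t) ↔ σ s < σ t) ∧
      ∀ s : {s : Fin k // s ∉ S}, f s.1 = e s

/-!
A permutation of length at least two is, in a canonical way, the inflation of a simple permutation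
by shorter permutations. Fix a quantifier rank `r`. There are finitely many types of permutations
of rank `r`, and the type of an inflation is determined by its skeleton and the types of its parts.
Hence, when only finitely many skeletons are available, the generating functions of the types
satisfy a system `y t = p t + ∑ γ, ∏ i, y (c γ i)` in which every product has at least two factors.
Since the `y t` have no constant term, the Jacobian of this system is the identity modulo `X`, so
every derivation over `k(X)` kills the `y t`; these are therefore algebraic.

It remains to see that membership in the set to be counted depends only on the type, for `r` large.
Avoiding a blocked or a barred permutation is a first-order property. By a minimal bad sequence
argument the permutations with simple patterns in the class are well quasi-ordered by containment,
so within them the class itself is cut out by finitely many forbidden patterns.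
-/
/-! ### Algebraic systems -/

section AlgebraicSystems

open MvPolynomial

theorem derivation_aeval {K E M ι : Type*} [CommRing K] [CommRing E] [Algebra K E]
    [AddCommGroup M] [Module K M] [Module E M] [Fintype ι] (D : Derivation K E M) (y : ι → E)
    (P : MvPolynomial ι K) : D (aeval y P) = ∑ s, aeval y (pderiv s P) • D (y s) := by
  classical
  induction P using MvPolynomial.induction_on with
  | C a => simp
  | add P Q hP hQ => simp only [map_add, hP, hQ, add_smul, Finset.sum_add_distrib]
  | mul_X P t hP =>
    simp only [map_mul, aeval_X, Derivation.leibniz, hP, pderiv_X, map_add, smul_eq_mul, add_smul,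
      Finset.sum_add_distrib, Finset.smul_sum, mul_smul]
    congr 1
    rw [Finset.sum_eq_single t]
    · simp
    · intro s _ hst
      simp [Pi.single_eq_of_ne' hst]
    · simp

theorem map_pderiv_prod_eq_zero {R A I ι : Type*} [CommRing R] [CommRing A] [Fintype I]
    [Nontrivial I] (φ : MvPolynomial ι R →+* A) (f : I → MvPolynomial ι R)
    (hf : ∀ i, φ (f i) = 0) (s : ι) :
    φ (pderiv s (∏ i, f i)) = 0 := by
  classical
  obtain ⟨i, j, hij⟩ := exists_pair_ne I
  have hrest : φ (∏ k ∈ Finset.univ.erase i, f k) = 0 := by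
    rw [map_prod]
    exact Finset.prod_eq_zero (Finset.mem_erase.2 ⟨hij.symm, Finset.mem_univ j⟩) (hf j)
  rw [← Finset.mul_prod_erase _ _ (Finset.mem_univ i), Derivation.leibniz]
  simp only [smul_eq_mul, map_add, map_mul, hf, hrest, zero_mul, add_zero]

variable {K E ι : Type*} [Field K] [Field E] [Algebra K E]

theorem derivation_eq_zero_of_adjoin_eq_top {M : Type*} [AddCommGroup M] [Module K M] [Module E M]
    {s : Set E} (hs : IntermediateField.adjoin K s = ⊤) (D : Derivation K E M)
    (hD : ∀ x ∈ s, D x = 0) : D = 0 := by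
  ext x
  have hx : x ∈ IntermediateField.adjoin K s := hs ▸ IntermediateField.mem_top
  induction hx using IntermediateField.adjoin_induction with
  | mem x hx => exact hD x hx
  | algebraMap a => exact D.map_algebraMap a
  | add x y _ _ hx hy => simp [hx, hy]
  | mul x y _ _ hx hy => simp [D.leibniz, hx, hy]
  | inv x _ hx => simp [D.leibniz_inv, hx]

theorem formallyUnramified_of_forall_derivation_eq_zero
    (h : ∀ D : Derivation K E E, D = 0) : Algebra.FormallyUnramified K E := by
  have hdual (φ : Ω[E⁄K] →ₗ[E] E) : φ = 0 :=
    (KaehlerDifferential.linearMapEquivDerivation K E).injective ((h _).trans (h _).symm)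
  refine ⟨⟨fun a b => sub_eq_zero.1 ?_⟩⟩
  rw [← Module.forall_dual_apply_eq_zero_iff E]
  intro φ
  rw [hdual φ, LinearMap.zero_apply]

variable [Fintype ι] [DecidableEq ι]

theorem isSeparable_of_det_jacobian_ne_zero (P : ι → MvPolynomial ι K) (y : ι → E)
    (hy : IntermediateField.adjoin K (Set.range y) = ⊤) (hP : ∀ t, aeval y (P t) = 0)
    (hdet : (Matrix.of fun t s => aeval y (pderiv s (P t))).det ≠ 0) :
    Algebra.IsSeparable K E := by
  have hunramified : Algebra.FormallyUnramified K E := by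
    refine formallyUnramified_of_forall_derivation_eq_zero fun D => ?_
    have hzero : (fun s => D (y s)) = 0 := by
      refine Matrix.eq_zero_of_mulVec_eq_zero hdet (funext fun t => ?_)
      have hchain := derivation_aeval D y (P t)
      rw [hP t, map_zero] at hchain
      exact hchain.symm
    refine derivation_eq_zero_of_adjoin_eq_top hy D ?_
    rintro _ ⟨s, rfl⟩
    exact congrFun hzero s
  have hfg : Algebra.EssFiniteType K E := by
    rw [← IntermediateField.fg_top_iff, ← hy]
    exact IntermediateField.fg_adjoin_of_finite (Set.finite_range y)
  exact (Algebra.FormallyUnramified.iff_isSeparable K E).1 hunramified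

theorem isAlgebraic_of_det_jacobian_ne_zero (P : ι → MvPolynomial ι K) (y : ι → E)
    (hP : ∀ t, aeval y (P t) = 0)
    (hdet : (Matrix.of fun t s => aeval y (pderiv s (P t))).det ≠ 0) (t : ι) :
    IsAlgebraic K (y t) := by
  let L := IntermediateField.adjoin K (Set.range y)
  let z : ι → L := fun t => ⟨y t, IntermediateField.subset_adjoin K _ ⟨t, rfl⟩⟩
  have haeval (Q : MvPolynomial ι K) : aeval y Q = algebraMap L E (aeval z Q) :=
    aeval_algebraMap_apply E z Q
  have hz : IntermediateField.adjoin K (Set.range z) = ⊤ := by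
    apply IntermediateField.lift_injective L
    rw [IntermediateField.lift_adjoin, IntermediateField.lift_top, ← Set.range_comp]
    rfl
  have hsep : Algebra.IsSeparable K L := by
    refine isSeparable_of_det_jacobian_ne_zero P z hz (fun t => ?_) fun h0 => hdet ?_
    · exact (algebraMap L E).injective (by rw [← haeval, hP, map_zero])
    · have hmap : (Matrix.of fun t s => aeval y (pderiv s (P t))) =
          (algebraMap L E).mapMatrix (Matrix.of fun t s => aeval z (pderiv s (P t))) := by
        ext t s
        exact haeval _
      rw [hmap, ← RingHom.map_det, h0, map_zero]
  exact ((Algebra.IsSeparable.isAlgebraic K L).isAlgebraic (z t)).algHom L.val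

theorem isAlgebraic_of_det_jacobian_ne_zero_of_isDomain {R A : Type*} [CommRing R] [IsDomain R]
    [CommRing A] [IsDomain A] [Algebra R A] [FaithfulSMul R A] (P : ι → MvPolynomial ι R)
    (y : ι → A) (hP : ∀ t, aeval y (P t) = 0)
    (hdet : (Matrix.of fun t s => aeval y (pderiv s (P t))).det ≠ 0) (t : ι) :
    IsAlgebraic R (y t) := by
  let : Algebra (FractionRing R) (FractionRing A) := FractionRing.liftAlgebra R _
  have := FractionRing.isScalarTower_liftAlgebra R (FractionRing A)
  have hinj : Function.Injective (algebraMap A (FractionRing A)) := IsFractionRing.injective _ _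
  have haeval (Q : MvPolynomial ι R) : aeval (algebraMap A (FractionRing A) ∘ y)
      (map (algebraMap R (FractionRing R)) Q) = algebraMap A (FractionRing A) (aeval y Q) := by
    rw [aeval_map_algebraMap, aeval_algebraMap_apply]
  have key : IsAlgebraic (FractionRing R) (algebraMap A (FractionRing A) (y t)) := by
    refine isAlgebraic_of_det_jacobian_ne_zero (fun t => map (algebraMap R (FractionRing R)) (P t))
      (algebraMap A (FractionRing A) ∘ y) (fun t => by rw [haeval, hP, map_zero]) ?_ t
    have hmap : (Matrix.of fun t s => aeval (algebraMap A (FractionRing A) ∘ y)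
        (pderiv s (map (algebraMap R (FractionRing R)) (P t)))) =
          (algebraMap A (FractionRing A)).mapMatrix
            (Matrix.of fun t s => aeval y (pderiv s (P t))) := by
      ext t s
      simp only [Matrix.of_apply, pderiv_map, haeval, RingHom.mapMatrix_apply, Matrix.map_apply]
    rw [hmap, ← RingHom.map_det]
    exact (map_ne_zero_iff _ hinj).2 hdet
  rw [← IsFractionRing.isAlgebraic_iff R (FractionRing R)] at key
  exact (isAlgebraic_algebraMap_iff hinj).1 key

theorem isAlgebraic_of_powerSeries_system {k ι : Type*} [Field k] [Finite ι]
    {Γ : ι → Type*} [∀ t, Fintype (Γ t)]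
    {I : ∀ t, Γ t → Type*} [∀ t γ, Fintype (I t γ)] [∀ t γ, Nontrivial (I t γ)]
    (c : ∀ t γ, I t γ → ι) (p : ι → Polynomial k) (y : ι → PowerSeries k)
    (hy₀ : ∀ t, PowerSeries.constantCoeff (y t) = 0)
    (hy : ∀ t, y t = algebraMap _ _ (p t) + ∑ γ, ∏ i, y (c t γ i)) (t : ι) :
    IsAlgebraic (Polynomial k) (y t) := by
  classical
  have := Fintype.ofFinite ι
  have : FaithfulSMul (Polynomial k) (PowerSeries k) :=
    (faithfulSMul_iff_algebraMap_injective _ _).2 (Polynomial.coe_injective k)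
  let P (t : ι) : MvPolynomial ι (Polynomial k) := X t - (C (p t) + ∑ γ, ∏ i, X (c t γ i))
  let φ : MvPolynomial ι (Polynomial k) →+* k :=
    PowerSeries.constantCoeff.comp (aeval y).toRingHom
  have hjacobian : PowerSeries.constantCoeff.mapMatrix
      (Matrix.of fun t s => aeval y (pderiv s (P t))) = 1 := by
    ext t s
    have hprod (γ : Γ t) : φ (pderiv s (∏ i, X (c t γ i))) = 0 :=
      map_pderiv_prod_eq_zero φ _ (fun i => by simp [φ, hy₀]) s
    change φ (pderiv s (P t)) = _
    simp only [P, map_sub, map_add, map_sum, hprod, pderiv_C, pderiv_X, Finset.sum_const_zero,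
      map_zero, add_zero, sub_zero, Pi.single_apply, Matrix.one_apply]
    split_ifs <;> simp
  refine isAlgebraic_of_det_jacobian_ne_zero_of_isDomain P y (fun t => ?_) (fun h0 => ?_) t
  · simpa [P, sub_eq_zero] using hy t
  · have := congrArg Matrix.det hjacobian
    rw [← RingHom.map_det, h0] at this
    simp at this

end AlgebraicSystems

/-! ### Generating functions -/

theorem ncard_univ_pi {I : Type*} [Fintype I] {A : I → Type*} (S : ∀ i, Set (A i)) :
    (Set.univ.pi S).ncard = ∏ i, (S i).ncard := by
  rw [← Nat.card_coe_set_eq, Nat.card_congr (Equiv.Set.univPi _), Nat.card_pi]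
  rfl

/-- The generating function `∑ n, #{x ∈ S | s x = n} Xⁿ` of a set `S` whose elements are counted by
the size `s`.  A size attained infinitely often contributes `0`. -/
noncomputable def sizeGenFun (R : Type*) [Semiring R] {A : Type*} (s : A → ℕ) (S : Set A) :
    PowerSeries R :=
  PowerSeries.mk fun n => ((S ∩ s ⁻¹' {n}).ncard : R)

namespace sizeGenFun

variable {R : Type*}

theorem congr_bijOn [Semiring R] {A B : Type*} {s : A → ℕ} {s' : B → ℕ} {S : Set A} {T : Set B}
    {f : A → B} (hf : Set.BijOn f S T) (hs : ∀ a ∈ S, s' (f a) = s a) :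
    sizeGenFun R s S = sizeGenFun R s' T := by
  ext n
  have himage : f '' (S ∩ s ⁻¹' {n}) = T ∩ s' ⁻¹' {n} := by
    rw [← hf.image_eq, ← Set.image_inter_preimage]
    congr 1
    ext a
    simp +contextual [hs]
  rw [sizeGenFun, sizeGenFun, PowerSeries.coeff_mk, PowerSeries.coeff_mk, ← himage,
    (hf.injOn.mono Set.inter_subset_left).ncard_image]

theorem iUnion [Semiring R] {A I : Type*} [Fintype I] {s : A → ℕ} {S : I → Set A}
    (hs : ∀ n, (s ⁻¹' {n}).Finite) (hS : Pairwise (Function.onFun Disjoint S)) :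
    sizeGenFun R s (⋃ i, S i) = ∑ i, sizeGenFun R s (S i) := by
  ext n
  simp only [sizeGenFun, map_sum, PowerSeries.coeff_mk]
  rw [Set.iUnion_inter, Set.ncard_iUnion_of_finite (fun i => (hs n).inter_of_right _)
    fun i j hij => (hS hij).mono Set.inter_subset_left Set.inter_subset_left]
  rw [finsum_eq_sum_of_fintype, Nat.cast_sum]

theorem union [Semiring R] {A : Type*} {s : A → ℕ} {S T : Set A} (hs : ∀ n, (s ⁻¹' {n}).Finite)
    (hST : Disjoint S T) : sizeGenFun R s (S ∪ T) = sizeGenFun R s S + sizeGenFun R s T := by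
  rw [Set.union_eq_iUnion, iUnion hs (pairwise_disjoint_on_bool.2 hST), Fintype.sum_bool]
  rfl

theorem pi [CommSemiring R] {I : Type*} [Fintype I] {A : I → Type*} {s : ∀ i, A i → ℕ}
    {S : ∀ i, Set (A i)} (hs : ∀ i n, (s i ⁻¹' {n}).Finite) :
    sizeGenFun R (fun a : ∀ i, A i => ∑ i, s i (a i)) (Set.univ.pi S) =
      ∏ i, sizeGenFun R (s i) (S i) := by
  classical
  ext n
  simp only [sizeGenFun, PowerSeries.coeff_mk, PowerSeries.coeff_prod, ← Nat.cast_prod,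
    ← Nat.cast_sum]
  congr 1
  let T (l : I →₀ ℕ) : Set (∀ i, A i) := Set.univ.pi fun i => S i ∩ s i ⁻¹' {l i}
  have hunion : Set.univ.pi S ∩ (fun a => ∑ i, s i (a i)) ⁻¹' {n} =
      ⋃ l ∈ (Finset.univ.finsuppAntidiag n : Finset (I →₀ ℕ)), T l := by
    ext a
    simp only [T, Set.mem_inter_iff, Set.mem_univ_pi, Set.mem_preimage, Set.mem_singleton_iff,
      Finset.mem_finsuppAntidiag, Finset.subset_univ, and_true, Set.mem_iUnion, exists_prop]
    constructor
    · rintro ⟨haS, han⟩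
      exact ⟨Finsupp.equivFunOnFinite.symm fun i => s i (a i), han, fun i => ⟨haS i, rfl⟩⟩
    · rintro ⟨l, hln, hal⟩
      exact ⟨fun i => (hal i).1, by rw [← hln]; exact Finset.sum_congr rfl fun i _ => (hal i).2⟩
  have hdisjoint : (SetLike.coe (Finset.univ.finsuppAntidiag n : Finset (I →₀ ℕ))).PairwiseDisjoint
      T := by
    intro l _ l' _ hne
    refine Set.disjoint_left.2 fun a ha ha' => hne (Finsupp.ext fun i => ?_)
    exact (ha i (Set.mem_univ i)).2.symm.trans (ha' i (Set.mem_univ i)).2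
  have hfinite (l : I →₀ ℕ) : (T l).Finite :=
    Set.Finite.pi fun i => (hs i (l i)).inter_of_right _
  rw [hunion, ← Finset.set_biUnion_coe, (Finset.finite_toSet _).ncard_biUnion (fun l _ => hfinite l)
    hdisjoint, finsum_mem_coe_finset]
  exact Finset.sum_congr rfl fun l _ => ncard_univ_pi _

theorem exists_eq_coe [Semiring R] {A : Type*} {S : Set A} (hS : S.Finite) (s : A → ℕ) :
    ∃ P : Polynomial R, sizeGenFun R s S = P := by
  classical
  refine ⟨∑ a ∈ hS.toFinset, Polynomial.X ^ s a, ?_⟩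
  ext n
  have hfilter : S ∩ s ⁻¹' {n} = {a ∈ hS.toFinset | n = s a} := by
    ext a
    simp [eq_comm]
  rw [sizeGenFun, PowerSeries.coeff_mk, hfilter, Set.ncard_coe_finset, Polynomial.coeff_coe,
    Polynomial.finsetSum_coeff]
  simp only [Polynomial.coeff_X_pow, Finset.sum_boole]

theorem constantCoeff_eq_zero [Semiring R] {A : Type*} {s : A → ℕ} {S : Set A}
    (hS : ∀ a ∈ S, s a ≠ 0) : PowerSeries.constantCoeff (sizeGenFun R s S) = 0 := by
  have hempty : S ∩ s ⁻¹' {0} = ∅ := Set.eq_empty_of_forall_notMem fun a ha => hS a ha.1 ha.2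
  rw [← PowerSeries.coeff_zero_eq_constantCoeff_apply, sizeGenFun, PowerSeries.coeff_mk, hempty,
    Set.ncard_empty, Nat.cast_zero]

end sizeGenFun

/-! ### Ehrenfeucht–Fraïssé games on binary colourings -/

section EhrenfeuchtFraisse

variable {κ A A' : Type*}

/-- The set of pairs `R` preserves the colours of the binary colourings `r` and `r'`. -/
def IsPartialIso (r : A → A → κ) (r' : A' → A' → κ) (R : Set (A × A')) : Prop :=
  ∀ x ∈ R, ∀ y ∈ R, r x.1 y.1 = r' x.2 y.2

theorem IsPartialIso.mono {r : A → A → κ} {r' : A' → A' → κ} {R R' : Set (A × A')} (h : R ⊆ R')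
    (hR' : IsPartialIso r r' R') : IsPartialIso r r' R :=
  fun x hx y hy => hR' x (h hx) y (h hy)

theorem IsPartialIso.symm {r : A → A → κ} {r' : A' → A' → κ} {R : Set (A × A')}
    (hR : IsPartialIso r r' R) : IsPartialIso r' r (Prod.swap ⁻¹' R) :=
  fun x hx y hy => (hR x.swap hx y.swap hy).symm

/-- Duplicator wins the `q`-round Ehrenfeucht–Fraïssé game on the colourings `r` and `r'` from the
position in which the pairs in `R` have been chosen. -/
def EFEquiv (r : A → A → κ) (r' : A' → A' → κ) : ℕ → Set (A × A') → Prop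
  | 0, R => IsPartialIso r r' R
  | q + 1, R => IsPartialIso r r' R ∧ (∀ a, ∃ a', EFEquiv r r' q (insert (a, a') R)) ∧
      ∀ a', ∃ a, EFEquiv r r' q (insert (a, a') R)

namespace EFEquiv

variable {r : A → A → κ} {r' : A' → A' → κ} {q : ℕ} {R R' : Set (A × A')}

theorem isPartialIso (h : EFEquiv r r' q R) : IsPartialIso r r' R := by
  cases q with
  | zero => exact h
  | succ q => exact h.1

theorem mono (hR : R ⊆ R') (h : EFEquiv r r' q R') : EFEquiv r r' q R := by
  induction q generalizing R R' with
  | zero => exact IsPartialIso.mono hR h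
  | succ q ih =>
    obtain ⟨hiso, hforth, hback⟩ := h
    exact ⟨hiso.mono hR, fun a => (hforth a).imp fun _ => ih (Set.insert_subset_insert hR),
      fun a' => (hback a').imp fun _ => ih (Set.insert_subset_insert hR)⟩

theorem of_succ (h : EFEquiv r r' (q + 1) R) : EFEquiv r r' q R := by
  induction q generalizing R with
  | zero => exact h.1
  | succ q ih =>
    exact ⟨h.1, fun a => (h.2.1 a).imp fun _ => ih, fun a' => (h.2.2 a').imp fun _ => ih⟩

theorem of_le {q' : ℕ} (hq : q ≤ q') (h : EFEquiv r r' q' R) : EFEquiv r r' q R :=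
  Nat.decreasingInduction (motive := fun n _ => EFEquiv r r' n R) (fun _ _ => of_succ) h hq

theorem symm (h : EFEquiv r r' q R) : EFEquiv r' r q (Prod.swap ⁻¹' R) := by
  have hinsert (R : Set (A × A')) (a : A) (a' : A') :
      Prod.swap ⁻¹' insert (a, a') R = insert (a', a) (Prod.swap ⁻¹' R) := by
    ext ⟨x, y⟩
    simp [and_comm]
  induction q generalizing R with
  | zero => exact IsPartialIso.symm h
  | succ q ih =>
    obtain ⟨hiso, hforth, hback⟩ := h
    exact ⟨hiso.symm, fun a' => (hback a').imp fun a ha => hinsert R a a' ▸ ih ha,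
      fun a => (hforth a).imp fun a' ha => hinsert R a a' ▸ ih ha⟩

theorem exists_extend_fin {k : ℕ} (h : EFEquiv r r' (q + k) R) (f : Fin k → A) :
    ∃ f' : Fin k → A', EFEquiv r r' q (R ∪ Set.range fun i => (f i, f' i)) := by
  induction k generalizing R with
  | zero => exact ⟨Fin.elim0, by simpa [Set.range_eq_empty] using h⟩
  | succ k ih =>
    obtain ⟨b', hb⟩ := h.2.1 (f 0)
    obtain ⟨f', hf⟩ := ih hb (Fin.tail f)
    refine ⟨Fin.cons b' f', hf.mono ?_⟩
    rintro x (hx | ⟨i, rfl⟩)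
    · exact Or.inl (Or.inr hx)
    · cases i using Fin.cases with
      | zero => exact Or.inl (Or.inl rfl)
      | succ i => exact Or.inr ⟨i, rfl⟩

theorem exists_extend {ι : Type*} [Fintype ι] (h : EFEquiv r r' (q + Fintype.card ι) R)
    (f : ι → A) : ∃ f' : ι → A', EFEquiv r r' q (R ∪ Set.range fun i => (f i, f' i)) := by
  obtain ⟨g, hg⟩ := h.exists_extend_fin (f ∘ (Fintype.equivFin ι).symm)
  refine ⟨g ∘ Fintype.equivFin ι, hg.mono (Set.union_subset_union_right _ ?_)⟩
  rintro _ ⟨i, rfl⟩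
  exact ⟨Fintype.equivFin ι i, by simp⟩

end EFEquiv

/-- The possible rank `q` types of `k`-tuples in a binary colouring with colours `κ`. -/
def QType (κ : Type*) : ℕ → ℕ → Type _
  | 0, k => Fin k → Fin k → κ
  | q + 1, k => (Fin k → Fin k → κ) × Set (QType κ q (k + 1))

theorem QType.finite (κ : Type*) [Finite κ] (q k : ℕ) : Finite (QType κ q k) := by
  induction q generalizing k with
  | zero => unfold QType; infer_instance
  | succ q ih =>
    have := ih (k + 1)
    unfold QType
    infer_instance

/-- The rank `q` type of a tuple: the colours between its entries and, for `q > 0`, the set of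
types of rank `q - 1` of its one-point extensions. -/
def qtype (r : A → A → κ) : ∀ (q : ℕ) {k : ℕ}, (Fin k → A) → QType κ q k
  | 0, _, a => fun i j => r (a i) (a j)
  | q + 1, _, a => (fun i j => r (a i) (a j), Set.range fun b => qtype r q (Fin.cons b a))

theorem range_cons_pair {k : ℕ} (a : Fin k → A) (a' : Fin k → A') (b : A) (b' : A') :
    (Set.range fun i : Fin (k + 1) => (Fin.cons (α := fun _ => A) b a i,
      Fin.cons (α := fun _ => A') b' a' i)) = insert (b, b') (Set.range fun i => (a i, a' i)) := by
  ext x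
  simp only [Set.mem_range, Fin.exists_fin_succ, Fin.cons_zero, Fin.cons_succ, Set.mem_insert_iff,
    eq_comm]

theorem qtype_eq_iff {r : A → A → κ} {r' : A' → A' → κ} (q : ℕ) {k : ℕ} (a : Fin k → A)
    (a' : Fin k → A') :
    qtype r q a = qtype r' q a' ↔ EFEquiv r r' q (Set.range fun i => (a i, a' i)) := by
  have hatomic {k : ℕ} (a : Fin k → A) (a' : Fin k → A') :
      ((fun i j => r (a i) (a j)) = fun i j => r' (a' i) (a' j)) ↔
        IsPartialIso r r' (Set.range fun i => (a i, a' i)) := by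
    simp only [funext_iff, IsPartialIso, Set.forall_mem_range]
  induction q generalizing k with
  | zero => exact hatomic a a'
  | succ q ih =>
    refine Prod.mk_inj.trans (and_congr (hatomic a a') ?_)
    simp only [← range_cons_pair, ← ih, Set.Subset.antisymm_iff, Set.range_subset_iff,
      Set.mem_range, eq_comm]

/-- The rank `q` type of a binary colouring. -/
def colouringType (q : ℕ) (r : A → A → κ) : QType κ q 0 :=
  qtype r q Fin.elim0

theorem colouringType_eq_iff {r : A → A → κ} {r' : A' → A' → κ} {q : ℕ} :
    colouringType q r = colouringType q r' ↔ EFEquiv r r' q ∅ := by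
  rw [colouringType, colouringType, qtype_eq_iff, Set.range_eq_empty]

/-- The binary colouring `s` of `B` is obtained from `c` by substituting the colouring `r i` for
each point `i`, the maps `f i` being the embeddings of the parts. -/
structure IsSubstitution {ι B : Type*} {P : ι → Type*} (c : ι → ι → κ) (r : ∀ i, P i → P i → κ)
    (s : B → B → κ) (f : ∀ i, P i → B) : Prop where
  exists_eq : ∀ b, ∃ i a, f i a = b
  within : ∀ i a a', s (f i a) (f i a') = r i a a'
  across : ∀ i j a a', i ≠ j → s (f i a) (f j a') = c i j

/-- Duplicator answers a move inside a part according to the game on that part. -/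
theorem EFEquiv.substitution {ι B B' : Type*} {P P' : ι → Type*} {c : ι → ι → κ}
    {r : ∀ i, P i → P i → κ} {r' : ∀ i, P' i → P' i → κ} {s : B → B → κ} {s' : B' → B' → κ}
    {f : ∀ i, P i → B} {f' : ∀ i, P' i → B'} (hs : IsSubstitution c r s f)
    (hs' : IsSubstitution c r' s' f') {q : ℕ} {R : ∀ i, Set (P i × P' i)}
    (h : ∀ i, EFEquiv (r i) (r' i) q (R i)) :
    EFEquiv s s' q (⋃ i, Prod.map (f i) (f' i) '' R i) := by
  classical
  have hiso {q} {R : ∀ i, Set (P i × P' i)} (h : ∀ i, EFEquiv (r i) (r' i) q (R i)) :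
      IsPartialIso s s' (⋃ i, Prod.map (f i) (f' i) '' R i) := by
    simp only [IsPartialIso, Set.mem_iUnion, Set.mem_image]
    rintro _ ⟨i, x, hx, rfl⟩ _ ⟨j, y, hy, rfl⟩
    obtain rfl | hij := eq_or_ne i j
    · simpa only [Prod.map, hs.within, hs'.within] using (h i).isPartialIso x hx y hy
    · simp only [Prod.map, hs.across i j _ _ hij, hs'.across i j _ _ hij]
  have hstep {q} {R : ∀ i, Set (P i × P' i)} (h : ∀ i, EFEquiv (r i) (r' i) (q + 1) (R i))
      (ih : ∀ {R : ∀ i, Set (P i × P' i)}, (∀ i, EFEquiv (r i) (r' i) q (R i)) →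
        EFEquiv s s' q (⋃ i, Prod.map (f i) (f' i) '' R i))
      (i : ι) (a : P i) (a' : P' i) (ha : EFEquiv (r i) (r' i) q (insert (a, a') (R i))) :
      EFEquiv s s' q (insert (f i a, f' i a') (⋃ i, Prod.map (f i) (f' i) '' R i)) := by
    refine (ih (R := Function.update R i (insert (a, a') (R i))) fun j => ?_).mono ?_
    · obtain rfl | hj := eq_or_ne j i
      · rwa [Function.update_self]
      · rw [Function.update_of_ne hj]
        exact (h j).of_succ
    · have hle : R ≤ Function.update R i (insert (a, a') (R i)) :=
        le_update_self_iff.2 (Set.subset_insert _ _)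
      refine Set.insert_subset (Set.mem_iUnion_of_mem i ⟨(a, a'), ?_, rfl⟩)
        (Set.iUnion_mono fun j => Set.image_mono (hle j))
      simp
  induction q generalizing R with
  | zero => exact hiso h
  | succ q ih =>
    refine ⟨hiso h, fun b => ?_, fun b' => ?_⟩
    · obtain ⟨i, a, rfl⟩ := hs.exists_eq b
      obtain ⟨a', ha⟩ := (h i).2.1 a
      exact ⟨f' i a', hstep h ih i a a' ha⟩
    · obtain ⟨i, a', rfl⟩ := hs'.exists_eq b'
      obtain ⟨a, ha⟩ := (h i).2.2 a'
      exact ⟨f i a, hstep h ih i a a' ha⟩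

theorem IsSubstitution.colouringType_eq {ι B B' : Type*} {P P' : ι → Type*} {c : ι → ι → κ}
    {r : ∀ i, P i → P i → κ} {r' : ∀ i, P' i → P' i → κ} {s : B → B → κ} {s' : B' → B' → κ}
    {f : ∀ i, P i → B} {f' : ∀ i, P' i → B'} (hs : IsSubstitution c r s f)
    (hs' : IsSubstitution c r' s' f') {q : ℕ}
    (h : ∀ i, colouringType q (r i) = colouringType q (r' i)) :
    colouringType q s = colouringType q s' :=
  colouringType_eq_iff.2 <| (EFEquiv.substitution hs hs' fun i =>
    colouringType_eq_iff.1 (h i)).mono (Set.empty_subset _)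

end EhrenfeuchtFraisse

/-! ### Clans, quotients and cuts -/

section Clans

variable {κ A B B' : Type*}

/-- A clan of the binary colouring `r` is a set whose elements all look the same from each point
outside.  For the colouring of a permutation this is an interval. -/
def IsClan (r : A → A → κ) (I : Set A) : Prop :=
  ∀ a ∈ I, ∀ b ∈ I, ∀ c ∉ I, r a c = r b c ∧ r c a = r c b

theorem isClan_singleton (r : A → A → κ) (a : A) : IsClan r {a} := by
  rintro _ rfl _ rfl _ _
  exact ⟨rfl, rfl⟩

theorem IsClan.preimage {r : A → A → κ} {I : Set A} (hI : IsClan r I) {s : B → B → κ} {f : B → A}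
    (hf : ∀ x y, r (f x) (f y) = s x y) : IsClan s (f ⁻¹' I) := by
  intro a ha b hb c hc
  rw [← hf, ← hf, ← hf, ← hf]
  exact hI _ ha _ hb _ hc

/-- The binary colouring `r` is primitive if it has only trivial clans.  For the colouring of a
permutation this says that the permutation is simple. -/
def IsPrimitive (r : A → A → κ) : Prop :=
  ∀ I, IsClan r I → I.Subsingleton ∨ I = Set.univ

theorem IsPrimitive.eq_univ {r : A → A → κ} (hr : IsPrimitive r) {I : Set A} (hI : IsClan r I)
    {a b : A} (ha : a ∈ I) (hb : b ∈ I) (hab : a ≠ b) : I = Set.univ :=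
  (hr I hI).resolve_left fun h => hab (h ha hb)

theorem isPrimitive_of_forall_eq_or {r : A → A → κ} {i j : A}
    (hall : ∀ k, k = i ∨ k = j) : IsPrimitive r := by
  refine fun I _ => or_iff_not_imp_left.2 fun hI => ?_
  obtain ⟨x, hx, y, hy, hxy⟩ := Set.not_subsingleton_iff.1 hI
  exact Set.eq_univ_of_forall fun k => by grind [hall k, hall x, hall y]

/-- The binary colouring `s` is the quotient of `r` by the fibres of `q`. -/
structure IsQuotient (r : A → A → κ) (s : B → B → κ) (q : A → B) : Prop where
  surjective : Function.Surjective q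
  apply_eq : ∀ x y, q x ≠ q y → r x y = s (q x) (q y)

theorem IsQuotient.refl (r : A → A → κ) : IsQuotient r r id :=
  ⟨Function.surjective_id, fun _ _ _ => rfl⟩

theorem IsClan.isQuotient {r : A → A → κ} {I : Set A} (hI : IsClan r I) {a : A} (ha : a ∈ I)
    {s : B → B → κ} {f : B → A} (hf : ∀ x y, r (f x) (f y) = s x y)
    (hinj : Function.Injective f) {q : A → B} (hq : Function.Surjective q)
    (hqI : ∀ x ∈ I, f (q x) = a) (hqI' : ∀ x ∉ I, f (q x) = x) : IsQuotient r s q := by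
  refine ⟨hq, fun x y hxy => ?_⟩
  rw [← hf]
  by_cases hx : x ∈ I <;> by_cases hy : y ∈ I
  · exact absurd (hinj ((hqI x hx).trans (hqI y hy).symm)) hxy
  · rw [hqI x hx, hqI' y hy]
    exact (hI x hx a ha y hy).1
  · rw [hqI' x hx, hqI y hy]
    exact (hI y hy a ha x hx).2
  · rw [hqI' x hx, hqI' y hy]

namespace IsQuotient

variable {r : A → A → κ} {s : B → B → κ} {s' : B' → B' → κ} {q : A → B} {q' : A → B'}

theorem comp {q₂ : B → B'} (h₂ : IsQuotient s s' q₂) (h : IsQuotient r s q) :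
    IsQuotient r s' (q₂ ∘ q) :=
  ⟨h₂.surjective.comp h.surjective, fun x y hxy =>
    (h.apply_eq x y fun e => hxy (congrArg q₂ e)).trans (h₂.apply_eq _ _ hxy)⟩

theorem preimage_isClan (h : IsQuotient r s q) {J : Set B} (hJ : IsClan s J) :
    IsClan r (q ⁻¹' J) := by
  intro a ha b hb c hc
  have hne {x : A} (hx : x ∈ q ⁻¹' J) : q x ≠ q c := fun e => hc (by rwa [Set.mem_preimage, ← e])
  rw [h.apply_eq a c (hne ha), h.apply_eq b c (hne hb), h.apply_eq c a (hne ha).symm,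
    h.apply_eq c b (hne hb).symm]
  exact hJ _ ha _ hb _ hc

theorem image_isClan (h : IsQuotient r s q) {I : Set A} (hI : IsClan r I) :
    IsClan s (q '' I) := by
  rintro _ ⟨a, ha, rfl⟩ _ ⟨b, hb, rfl⟩ c hc
  obtain ⟨c, rfl⟩ := h.surjective c
  have hne {x : A} (hx : x ∈ I) : q x ≠ q c := fun e => hc ⟨x, hx, e⟩
  rw [← h.apply_eq a c (hne ha), ← h.apply_eq b c (hne hb), ← h.apply_eq c a (hne ha).symm,
    ← h.apply_eq c b (hne hb).symm]
  exact hI a ha b hb c fun hcI => hc ⟨c, hcI, rfl⟩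

/-- Otherwise the image of the complement of `I` would be a point whose complement is a clan. -/
theorem eq_univ_of_isPrimitive (h : IsQuotient r s q) (hs : IsPrimitive s)
    (hB : ∀ b : B, ({b}ᶜ : Set B).Nontrivial) {I : Set A} (hI : IsClan r I) {x y : A}
    (hx : x ∈ I) (hy : y ∈ I) (hxy : q x ≠ q y) : I = Set.univ := by
  have himage : q '' I = Set.univ :=
    hs.eq_univ (h.image_isClan hI) (Set.mem_image_of_mem q hx) (Set.mem_image_of_mem q hy) hxy
  refine Set.eq_univ_of_forall fun z => by_contra fun hz => ?_
  have hclan : IsClan s {q z}ᶜ := by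
    have hmem (b : B) : b ∈ q '' I := himage ▸ Set.mem_univ b
    intro a ha b hb c hc
    obtain ⟨a, haI, rfl⟩ := hmem a
    obtain ⟨b, hbI, rfl⟩ := hmem b
    obtain rfl : c = q z := not_not.1 hc
    rw [← h.apply_eq a z ha, ← h.apply_eq b z hb, ← h.apply_eq z a (Ne.symm ha),
      ← h.apply_eq z b (Ne.symm hb)]
    exact hI a haI b hbI z hz
  obtain ⟨a, ha, b, hb, hab⟩ := hB (q z)
  exact (hs.eq_univ hclan ha hb hab).ge (Set.mem_univ (q z)) rfl

theorem apply_eq_iff_of_isPrimitive [Nontrivial B'] (h : IsQuotient r s q)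
    (h' : IsQuotient r s' q') (hs : IsPrimitive s) (hs' : IsPrimitive s')
    (hB : ∀ b : B, ({b}ᶜ : Set B).Nontrivial) (x y : A) : q x = q y ↔ q' x = q' y := by
  have hforward (x y : A) (hxy : q' x = q' y) : q x = q y := by
    by_contra hne
    have hfibre : q' ⁻¹' {q' x} = Set.univ :=
      h.eq_univ_of_isPrimitive hs hB (h'.preimage_isClan (isClan_singleton s' (q' x))) rfl
        hxy.symm hne
    obtain ⟨b, hb⟩ := exists_ne (q' x)
    obtain ⟨z, rfl⟩ := h'.surjective b
    exact hb (hfibre.ge (Set.mem_univ z))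
  refine ⟨fun hxy => by_contra fun hne => ?_, hforward x y⟩
  have himage : q' '' (q ⁻¹' {q x}) = Set.univ :=
    hs'.eq_univ (h'.image_isClan (h.preimage_isClan (isClan_singleton s (q x))))
      ⟨x, rfl, rfl⟩ ⟨y, hxy.symm, rfl⟩ hne
  obtain ⟨b, hb⟩ := (hB (q x)).nonempty
  obtain ⟨w, rfl⟩ := h.surjective b
  obtain ⟨z, hz, hzw⟩ := himage.ge (Set.mem_univ (q' w))
  exact hb ((hforward w z hzw.symm).trans hz)

end IsQuotient

/-- The nonempty proper subset `D` of the binary colouring `r` cuts it with colour `c`: all pairs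
in `D × Dᶜ` have colour `c`. -/
structure IsCut (c : κ) (r : A → A → κ) (D : Set A) : Prop where
  nonempty : D.Nonempty
  nonempty_compl : Dᶜ.Nonempty
  apply_eq : ∀ x ∈ D, ∀ y ∉ D, r x y = c

theorem IsQuotient.isCut_preimage {r : A → A → κ} {s : B → B → κ} {q : A → B}
    (h : IsQuotient r s q) {i j : B} (hij : i ≠ j) (hall : ∀ k, k = i ∨ k = j) :
    IsCut (s i j) r (q ⁻¹' {i}) := by
  obtain ⟨x, hx⟩ := h.surjective i
  obtain ⟨y, rfl⟩ := h.surjective j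
  refine ⟨⟨x, hx⟩, ⟨y, hij.symm⟩, fun x hx y' hy' => ?_⟩
  obtain rfl : q x = i := hx
  rw [h.apply_eq x y' (Ne.symm hy'), (hall (q y')).resolve_left hy']

theorem IsCut.minimal_iff {c : κ} {r : A → A → κ} {D : Set A} (hD : IsCut c r D)
    {s : B → B → κ} {f : B → A} (hf : Set.range f = D) (hinj : Function.Injective f)
    (hfs : ∀ x y, r (f x) (f y) = s x y) :
    Minimal (IsCut c r) D ↔ ¬ ∃ E, IsCut c s E := by
  subst hf
  constructor
  · rintro ⟨-, hmin⟩ ⟨E, hE⟩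
    have hsub : f '' E ⊆ Set.range f := Set.image_subset_range f E
    obtain ⟨b, hb⟩ := hE.nonempty_compl
    refine hb (hinj.mem_set_image.1 (hmin ⟨hE.nonempty.image f, ?_, ?_⟩ hsub ⟨b, rfl⟩))
    · exact hD.nonempty_compl.mono (Set.compl_subset_compl.2 hsub)
    · rintro _ ⟨a, ha, rfl⟩ y hy
      by_cases hyD : y ∈ Set.range f
      · obtain ⟨b, rfl⟩ := hyD
        rw [hfs, hE.apply_eq a ha b fun hb => hy ⟨b, hb, rfl⟩]
      · exact hD.apply_eq _ ⟨a, rfl⟩ y hyD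
  · refine fun hE => ⟨hD, fun D' hD' hle => ?_⟩
    by_contra hlt
    obtain ⟨_, ⟨b, rfl⟩, hb⟩ := Set.not_subset.1 hlt
    refine hE ⟨f ⁻¹' D', ?_, ⟨b, hb⟩, fun x hx y hy => hfs x y ▸ hD'.apply_eq _ hx _ hy⟩
    exact hD'.nonempty.preimage' hle

end Clans

theorem compl_singleton_nontrivial_or_exists_forall_eq_or (A : Type*) [LinearOrder A]
    [Nontrivial A] :
    (∀ b : A, ({b}ᶜ : Set A).Nontrivial) ∨ ∃ i j : A, i < j ∧ ∀ k, k = i ∨ k = j := by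
  refine or_iff_not_imp_left.2 fun h => ?_
  obtain ⟨b, hb⟩ := not_forall.1 h
  have hsub := Set.not_nontrivial_iff.1 hb
  obtain ⟨a, hab⟩ := exists_ne b
  have hall (k : A) : k = a ∨ k = b := (ne_or_eq k b).imp_left fun hk => hsub hk hab
  obtain hlt | hlt := hab.lt_or_gt
  exacts [⟨a, b, hlt, hall⟩, ⟨b, a, hlt, fun k => (hall k).symm⟩]

/-! ### Permutations of arbitrary length -/

/-- A permutation together with its length. -/
structure FinPerm where
  len : ℕ
  perm : Perm len

namespace FinPerm

/-- A permutation as a binary colouring of its indices: the colour of a pair records how the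
indices and how their images compare. -/
def rel (p : FinPerm) (x y : Fin p.len) : Prop × Prop := (x < y, p.perm x < p.perm y)

theorem rel_eq_iff {p p' : FinPerm} {x y : Fin p.len} {x' y' : Fin p'.len} :
    p.rel x y = p'.rel x' y' ↔
      (x < y ↔ x' < y') ∧ (p.perm x < p.perm y ↔ p'.perm x' < p'.perm y') := by
  simp only [rel, Prod.mk_inj, eq_iff_iff]

theorem rel_comm_iff {p : FinPerm} {x y : Fin p.len} : p.rel x y = p.rel y x ↔ x = y := by
  refine ⟨fun h => ?_, fun h => h ▸ rfl⟩
  have hlt := (rel_eq_iff.1 h).1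
  grind

theorem rel_eq_rel_swap {p p' : FinPerm} {x y : Fin p.len} {x' y' : Fin p'.len} (hxy : x ≠ y)
    (hxy' : x' ≠ y') (h : p.rel x y = p'.rel x' y') : p.rel y x = p'.rel y' x' := by
  have hne := p.perm.injective.ne hxy
  have hne' := p'.perm.injective.ne hxy'
  rw [rel_eq_iff] at h ⊢
  grind

theorem injective_of_rel {p p' : FinPerm} {f : Fin p.len → Fin p'.len}
    (hf : ∀ x y, p'.rel (f x) (f y) = p.rel x y) : Function.Injective f :=
  fun x y hxy => rel_comm_iff.1 (by rw [← hf, ← hf, hxy])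

theorem strictMono_of_rel {p p' : FinPerm} {f : Fin p.len → Fin p'.len}
    (hf : ∀ x y, p'.rel (f x) (f y) = p.rel x y) : StrictMono f :=
  fun x y => (rel_eq_iff.1 (hf x y)).1.2

theorem eq_id_of_strictMono {n : ℕ} {f : Fin n → Fin n} (hf : StrictMono f) : f = id :=
  le_antisymm hf.le_id hf.id_le

theorem exists_eq_of_rel {p p' : FinPerm} {f : Fin p.len → Fin p'.len}
    (hf : ∀ x y, p'.rel (f x) (f y) = p.rel x y) (hlen : p'.len ≤ p.len) :
    ∃ h : p = p', ∀ x, f x = Fin.cast (congrArg len h) x := by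
  obtain ⟨n, π⟩ := p
  obtain ⟨n', π'⟩ := p'
  have hle : n ≤ n' := by simpa using Fintype.card_le_of_injective f (injective_of_rel hf)
  obtain rfl : n = n' := hle.antisymm hlen
  have hid : f = id := eq_id_of_strictMono (strictMono_of_rel hf)
  have hmono : StrictMono (π' ∘ π.symm) := fun s t hst => by
    have h := (rel_eq_iff.1 (hf (π.symm s) (π.symm t))).2
    simpa [hid, hst] using h
  have hπ : π = π' := by
    ext x
    simpa using congrArg Fin.val (congrFun (eq_id_of_strictMono hmono) (π x)).symm
  exact ⟨by rw [hπ], fun x => congrFun hid x⟩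

theorem strictMono_and_forall_lt_iff {ι K : Type*} [LinearOrder ι] [LT K] {p : FinPerm}
    {f : ι → Fin p.len} {v : ι → K} :
    (StrictMono f ∧ ∀ s t, p.perm (f s) < p.perm (f t) ↔ v s < v t) ↔
      ∀ s t, p.rel (f s) (f t) = (s < t, v s < v t) := by
  simp only [rel, Prod.mk_inj, eq_iff_iff]
  exact ⟨fun ⟨hf, hv⟩ s t => ⟨hf.lt_iff_lt, hv s t⟩,
    fun h => ⟨fun s t => (h s t).1.2, fun s t => (h s t).2⟩⟩

theorem contains_iff {p p' : FinPerm} : Contains p.perm p'.perm ↔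
    ∃ f : Fin p.len → Fin p'.len, ∀ x y, p'.rel (f x) (f y) = p.rel x y :=
  exists_congr fun _ => strictMono_and_forall_lt_iff

/-- Permutations are ordered by containment. -/
instance : PartialOrder FinPerm where
  le p p' := Contains p.perm p'.perm
  le_refl p := contains_iff.2 ⟨id, fun _ _ => rfl⟩
  le_trans p p' p'' h h' := by
    obtain ⟨f, hf⟩ := contains_iff.1 h
    obtain ⟨g, hg⟩ := contains_iff.1 h'
    exact contains_iff.2 ⟨g ∘ f, fun x y => (hg _ _).trans (hf x y)⟩
  le_antisymm p p' h h' := by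
    obtain ⟨f, hf⟩ := contains_iff.1 h
    obtain ⟨g, hg⟩ := contains_iff.1 h'
    exact (exists_eq_of_rel hf (by
      simpa using Fintype.card_le_of_injective g (injective_of_rel hg))).1

theorem le_iff {p p' : FinPerm} :
    p ≤ p' ↔ ∃ f : Fin p.len → Fin p'.len, ∀ x y, p'.rel (f x) (f y) = p.rel x y :=
  contains_iff

theorem len_strictMono : StrictMono len := by
  intro p p' hlt
  obtain ⟨f, hf⟩ := le_iff.1 hlt.le
  exact lt_of_not_ge fun hlen => hlt.ne (exists_eq_of_rel hf hlen).1

instance : WellFoundedLT FinPerm := len_strictMono.wellFoundedLT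

theorem le_of_len_le_one {p p' : FinPerm} (h : p.len ≤ 1) (hlen : p.len ≤ p'.len) : p ≤ p' := by
  have : Subsingleton (Fin p.len) := Fin.subsingleton_iff_le_one.2 h
  exact le_iff.2 ⟨Fin.castLE hlen, fun x y => by
    simp [Subsingleton.elim y x, rel_eq_iff]⟩

theorem finite_len_preimage (n : ℕ) : (len ⁻¹' {n}).Finite := by
  refine (Set.finite_range (FinPerm.mk n)).subset ?_
  rintro ⟨_, π⟩ rfl
  exact ⟨π, rfl⟩

theorem exists_standardization {A K : Type*} [Finite A] [LinearOrder K] {u v : A → K}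
    (hu : Function.Injective u) (hv : Function.Injective v) :
    ∃ (p : FinPerm) (e : Fin p.len ≃ A),
      ∀ x y, p.rel x y = (u (e x) < u (e y), v (e x) < v (e y)) := by
  have := Fintype.ofFinite A
  have hsort {w : A → K} (hw : Function.Injective w) :
      ∃ e : Fin (Fintype.card A) ≃ A, ∀ x y, w (e x) < w (e y) ↔ x < y := by
    let : LinearOrder A := LinearOrder.lift' w hw
    let e : Fin (Fintype.card A) ≃o A := Fintype.orderIsoFinOfCardEq A rfl
    exact ⟨e.toEquiv, fun x y => e.lt_iff_lt⟩
  obtain ⟨e, he⟩ := hsort hu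
  obtain ⟨e', he'⟩ := hsort hv
  exact ⟨⟨_, e.trans e'.symm⟩, e, fun x y => by simp [rel, he, ← he']⟩

/-- The permutation `α` is the pattern of `p` on the set of indices `S`. -/
def IsPattern (p : FinPerm) (S : Set (Fin p.len)) (α : FinPerm) : Prop :=
  ∃ f : Fin α.len → Fin p.len, Set.range f = S ∧ ∀ x y, p.rel (f x) (f y) = α.rel x y

theorem exists_isPattern (p : FinPerm) (S : Set (Fin p.len)) : ∃ α, IsPattern p S α := by
  classical
  obtain ⟨α, e, he⟩ := exists_standardization (A := S) (u := fun x => x.1)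
    (v := fun x => p.perm x.1) Subtype.val_injective
    (p.perm.injective.comp Subtype.val_injective)
  refine ⟨α, fun x => (e x).1, ?_, fun x y => (he x y).symm⟩
  exact (e.surjective.range_comp Subtype.val).trans Subtype.range_val

namespace IsPattern

variable {p α α' : FinPerm} {S : Set (Fin p.len)}

theorem le (h : IsPattern p S α) : α ≤ p := by
  obtain ⟨f, -, hf⟩ := h
  exact le_iff.2 ⟨f, hf⟩

theorem le_of_forall_mem {f : Fin α'.len → Fin p.len} (h : IsPattern p S α) (hS : ∀ x, f x ∈ S)
    (hf : ∀ x y, p.rel (f x) (f y) = α'.rel x y) : α' ≤ α := by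
  obtain ⟨g, rfl, hg⟩ := h
  choose k hk using hS
  exact le_iff.2 ⟨k, fun x y => by rw [← hg, hk, hk, hf]⟩

theorem unique (h : IsPattern p S α) (h' : IsPattern p S α') : α = α' := by
  obtain ⟨f, hS, hf⟩ := id h
  obtain ⟨f', hS', hf'⟩ := id h'
  exact le_antisymm (h'.le_of_forall_mem (fun x => hS ▸ Set.mem_range_self x) hf)
    (h.le_of_forall_mem (fun x => hS' ▸ Set.mem_range_self x) hf')

end IsPattern

end FinPerm

/-! ### The canonical decomposition of a permutation -/

namespace FinPerm

/-- The permutation `p` is the inflation of `σ` by the permutations `α i`. -/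
def IsInflation (σ : FinPerm) (α : Fin σ.len → FinPerm) (p : FinPerm) : Prop :=
  ∃ f, IsSubstitution σ.rel (fun i => (α i).rel) p.rel f

theorem exists_isInflation (σ : FinPerm) (α : Fin σ.len → FinPerm) :
    ∃ p, IsInflation σ α p := by
  let u (x : Σ i, Fin (α i).len) : ℕ ×ₗ ℕ := toLex (x.1, x.2)
  let v (x : Σ i, Fin (α i).len) : ℕ ×ₗ ℕ := toLex (σ.perm x.1, (α x.1).perm x.2)
  have hu : Function.Injective u := by
    rintro ⟨i, a⟩ ⟨j, b⟩ h
    obtain ⟨hij, hab⟩ := Prod.mk.inj (toLex.injective h)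
    obtain rfl : i = j := Fin.ext hij
    obtain rfl : a = b := Fin.ext hab
    rfl
  have hv : Function.Injective v := by
    rintro ⟨i, a⟩ ⟨j, b⟩ h
    obtain ⟨hij, hab⟩ := Prod.mk.inj (toLex.injective h)
    obtain rfl : i = j := σ.perm.injective (Fin.ext hij)
    obtain rfl : a = b := (α i).perm.injective (Fin.ext hab)
    rfl
  obtain ⟨p, e, he⟩ := exists_standardization hu hv
  refine ⟨p, fun i a => e.symm ⟨i, a⟩, fun x => ⟨_, _, e.symm_apply_apply x⟩, fun i a b => ?_,
    fun i j a b hij => ?_⟩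
  · rw [he]
    simp [u, v, rel, Prod.Lex.toLex_lt_toLex]
  · have hval : (i : ℕ) ≠ j := Fin.val_ne_of_ne hij
    have hval' : (σ.perm i : ℕ) ≠ σ.perm j := Fin.val_ne_of_ne (σ.perm.injective.ne hij)
    rw [he]
    simp [u, v, rel, Prod.Lex.toLex_lt_toLex, hval, hval']

namespace IsInflation

variable {σ p p' : FinPerm} {α α' : Fin σ.len → FinPerm}

theorem mono (h : IsInflation σ α p) (h' : IsInflation σ α' p') (hα : ∀ i, α i ≤ α' i) :
    p ≤ p' := by
  obtain ⟨f, hf⟩ := h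
  obtain ⟨f', hf'⟩ := h'
  choose g hg using fun i => le_iff.1 (hα i)
  choose i a hia using hf.exists_eq
  have hrel (i j : Fin σ.len) (a : Fin (α i).len) (b : Fin (α j).len) :
      p'.rel (f' i (g i a)) (f' j (g j b)) = p.rel (f i a) (f j b) := by
    obtain rfl | hij := eq_or_ne i j
    · rw [hf'.within, hf.within, hg]
    · rw [hf'.across _ _ _ _ hij, hf.across _ _ _ _ hij]
  exact le_iff.2 ⟨fun x => f' (i x) (g (i x) (a x)), fun x y => by rw [hrel, hia, hia]⟩

theorem unique (h : IsInflation σ α p) (h' : IsInflation σ α p') : p = p' :=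
  le_antisymm (h.mono h' fun _ => le_rfl) (h'.mono h fun _ => le_rfl)

theorem colouringType_eq (h : IsInflation σ α p) (h' : IsInflation σ α' p') {r : ℕ}
    (hα : ∀ i, colouringType r (α i).rel = colouringType r (α' i).rel) :
    colouringType r p.rel = colouringType r p'.rel := by
  obtain ⟨f, hf⟩ := h
  obtain ⟨f', hf'⟩ := h'
  exact hf.colouringType_eq hf' hα

theorem bijective_sigma {f : ∀ i, Fin (α i).len → Fin p.len}
    (hf : IsSubstitution σ.rel (fun i => (α i).rel) p.rel f) :
    Function.Bijective fun x : Σ i, Fin (α i).len => f x.1 x.2 := by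
  refine ⟨?_, fun x => ?_⟩
  · rintro ⟨i, a⟩ ⟨j, b⟩ (hab : f i a = f j b)
    obtain rfl : i = j := by
      by_contra hij
      refine hij (rel_comm_iff.1 ?_)
      rw [← hf.across i j a b hij, ← hf.across j i b a (Ne.symm hij), hab]
    rw [injective_of_rel (hf.within i) hab]
  · obtain ⟨i, a, rfl⟩ := hf.exists_eq x
    exact ⟨⟨i, a⟩, rfl⟩

theorem len_eq (h : IsInflation σ α p) : p.len = ∑ i, (α i).len := by
  obtain ⟨f, hf⟩ := h
  simpa using (Fintype.card_congr (Equiv.ofBijective _ (bijective_sigma hf))).symm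

theorem len_lt (h : IsInflation σ α p) (hσ : 2 ≤ σ.len) (hα : ∀ i, 0 < (α i).len)
    (i : Fin σ.len) : (α i).len < p.len := by
  have : Nontrivial (Fin σ.len) := Fin.nontrivial_iff_two_le.2 hσ
  obtain ⟨j, hj⟩ := exists_ne i
  rw [h.len_eq]
  exact Finset.single_lt_sum (f := fun i => (α i).len) hj (Finset.mem_univ i) (Finset.mem_univ j)
    (hα j) fun _ _ _ => Nat.zero_le _

theorem exists_isQuotient (h : IsInflation σ α p) (hα : ∀ i, 0 < (α i).len) :
    ∃ q, IsQuotient p.rel σ.rel q ∧ ∀ i, IsPattern p (q ⁻¹' {i}) (α i) := by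
  obtain ⟨f, hf⟩ := h
  choose q a hqa using hf.exists_eq
  have hq (i : Fin σ.len) (b : Fin (α i).len) : q (f i b) = i :=
    congrArg Sigma.fst ((bijective_sigma hf).1 (a₁ := ⟨_, a (f i b)⟩) (a₂ := ⟨i, b⟩) (hqa _))
  refine ⟨q, ⟨fun i => ⟨f i ⟨0, hα i⟩, hq i _⟩, fun x y hxy => ?_⟩,
    fun i => ⟨f i, ?_, hf.within i⟩⟩
  · conv_lhs => rw [← hqa x, ← hqa y]
    exact hf.across _ _ _ _ hxy
  · ext x
    constructor
    · rintro ⟨b, rfl⟩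
      exact hq i b
    · rintro rfl
      exact ⟨a x, hqa x⟩

end IsInflation

end FinPerm

section Quotients

open FinPerm

namespace IsQuotient

variable {p σ σ' : FinPerm} {q : Fin p.len → Fin σ.len} {q' : Fin p.len → Fin σ'.len}

theorem finPerm_le (h : IsQuotient p.rel σ.rel q) : σ ≤ p := by
  choose f hf using h.surjective
  refine le_iff.2 ⟨f, fun x y => ?_⟩
  obtain rfl | hxy := eq_or_ne x y
  · simp [rel]
  · rw [h.apply_eq _ _ (by rwa [hf, hf]), hf, hf]

theorem isInflation (h : IsQuotient p.rel σ.rel q) {α : Fin σ.len → FinPerm}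
    (hα : ∀ i, IsPattern p (q ⁻¹' {i}) (α i)) : IsInflation σ α p := by
  choose f hrange hf using hα
  have hqf (i : Fin σ.len) (a : Fin (α i).len) : q (f i a) = i :=
    (hrange i).le (Set.mem_range_self a)
  refine ⟨f, fun x => ⟨q x, (hrange (q x)).ge rfl⟩, hf, fun i j a b hij => ?_⟩
  rw [h.apply_eq _ _ (by rwa [hqf, hqf]), hqf, hqf]

theorem exists_eq_of_apply_eq_iff (h : IsQuotient p.rel σ.rel q) (h' : IsQuotient p.rel σ'.rel q')
    (hqq' : ∀ x y, q x = q y ↔ q' x = q' y) :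
    ∃ hσ : σ = σ', ∀ x, q' x = Fin.cast (congrArg len hσ) (q x) := by
  choose f hf using h.surjective
  have hfq (x : Fin p.len) : q' (f (q x)) = q' x := (hqq' _ _).1 (hf _)
  have hrel (x y : Fin σ.len) : σ'.rel (q' (f x)) (q' (f y)) = σ.rel x y := by
    obtain rfl | hxy := eq_or_ne x y
    · simp [rel]
    · have hne : q (f x) ≠ q (f y) := by rwa [hf, hf]
      rw [← h'.apply_eq _ _ ((hqq' _ _).not.1 hne), h.apply_eq _ _ hne, hf, hf]
  have hlen : σ'.len ≤ σ.len := by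
    have hsurj : Function.Surjective (q' ∘ f) := fun y => by
      obtain ⟨x, rfl⟩ := h'.surjective y
      exact ⟨q x, hfq x⟩
    simpa using Fintype.card_le_of_surjective _ hsurj
  obtain ⟨hσ, hcast⟩ := exists_eq_of_rel hrel hlen
  exact ⟨hσ, fun x => by rw [← hfq, hcast]⟩

end IsQuotient

end Quotients

namespace FinPerm

theorem exists_isQuotient_of_isClan {p : FinPerm} {I : Set (Fin p.len)} (hI : IsClan p.rel I)
    (hne : I.Nontrivial) (huniv : I ≠ Set.univ) :
    ∃ σ < p, 2 ≤ σ.len ∧ ∃ q, IsQuotient p.rel σ.rel q := by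
  classical
  obtain ⟨a, ha, b, hb, hab⟩ := hne
  obtain ⟨d, hd⟩ := (Set.ne_univ_iff_exists_notMem I).1 huniv
  obtain ⟨σ, f, hrange, hf⟩ := exists_isPattern p (insert a Iᶜ)
  have hmem (x : Fin p.len) : ∃ y, f y = if x ∈ I then a else x := by
    rw [← Set.mem_range, hrange]
    split_ifs with hx
    exacts [Set.mem_insert a _, Set.mem_insert_of_mem a hx]
  choose q hq using hmem
  have hqI (x) (hx : x ∈ I) : f (q x) = a := by rw [hq, if_pos hx]
  have hqI' (x) (hx : x ∉ I) : f (q x) = x := by rw [hq, if_neg hx]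
  have hinj := injective_of_rel hf
  have hquot : IsQuotient p.rel σ.rel q := by
    refine hI.isQuotient ha hf hinj (fun y => ⟨f y, hinj ?_⟩) hqI hqI'
    obtain hy | hy : f y = a ∨ f y ∉ I := hrange.le (Set.mem_range_self y)
    · rw [hy, hqI a ha]
    · exact hqI' _ hy
  refine ⟨σ, lt_of_le_of_ne hquot.finPerm_le ?_, ?_, q, hquot⟩
  · rintro rfl
    refine hab ((Finite.injective_iff_surjective.2 hquot.surjective) (hinj ?_))
    rw [hqI a ha, hqI b hb]
  · refine Fin.nontrivial_iff_two_le.1 ⟨q a, q d, fun h => hd ?_⟩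
    rwa [← hqI' d hd, ← h, hqI a ha]

theorem exists_isPrimitive_isQuotient (p : FinPerm) (hp : 2 ≤ p.len) :
    ∃ σ : FinPerm, 2 ≤ σ.len ∧ IsPrimitive σ.rel ∧ ∃ q, IsQuotient p.rel σ.rel q := by
  induction p using WellFoundedLT.induction with | ind p ih => ?_
  by_cases hprim : IsPrimitive p.rel
  · exact ⟨p, hp, hprim, id, IsQuotient.refl _⟩
  obtain ⟨I, hI, hne, huniv⟩ : ∃ I, IsClan p.rel I ∧ I.Nontrivial ∧ I ≠ Set.univ := by
    simpa only [IsPrimitive, not_forall, not_or, Set.not_subsingleton_iff, exists_prop]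
      using hprim
  obtain ⟨τ, hτ, hlen, q, hq⟩ := exists_isQuotient_of_isClan hI hne huniv
  obtain ⟨σ, hσ, hprim, q₂, hq₂⟩ := ih τ hτ hlen
  exact ⟨σ, hσ, hprim, _, hq₂.comp hq⟩

section Cuts

variable {p : FinPerm} {c c' : Prop × Prop} {D D' : Set (Fin p.len)}

theorem isLowerSet_of_isCut (hc : c.1) (h : IsCut c p.rel D) : IsLowerSet D := by
  intro y x hxy hy
  by_contra hx
  have hlt : y < x := (congrArg Prod.fst (h.apply_eq y hy x hx)).mpr hc
  exact hlt.not_ge hxy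

theorem colour_eq_of_isCut (hc : c.1) (hc' : c'.1) (h : IsCut c p.rel D)
    (h' : IsCut c' p.rel D') : c = c' := by
  obtain hle | hle := (isLowerSet_of_isCut hc h).total (isLowerSet_of_isCut hc' h')
  · obtain ⟨x, hx⟩ := h.nonempty
    obtain ⟨y, hy⟩ := h'.nonempty_compl
    exact (h.apply_eq x hx y fun hyD => hy (hle hyD)).symm.trans (h'.apply_eq x (hle hx) y hy)
  · obtain ⟨x, hx⟩ := h'.nonempty
    obtain ⟨y, hy⟩ := h.nonempty_compl
    exact (h.apply_eq x (hle hx) y hy).symm.trans (h'.apply_eq x hx y fun hyD => hy (hle hyD))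

theorem eq_of_minimal_isCut (hc : c.1) (hc' : c'.1) (h : Minimal (IsCut c p.rel) D)
    (h' : Minimal (IsCut c' p.rel) D') : D = D' := by
  obtain rfl := colour_eq_of_isCut hc hc' h.prop h'.prop
  obtain hle | hle := (isLowerSet_of_isCut hc h.prop).total (isLowerSet_of_isCut hc h'.prop)
  · exact h'.eq_of_le h.prop hle
  · exact (h.eq_of_le h'.prop hle).symm

theorem exists_isQuotient_of_isCut (hc : c.1) (h : IsCut c p.rel D) :
    ∃ (σ : FinPerm) (q : Fin p.len → Fin σ.len) (i j : Fin σ.len), i < j ∧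
      (∀ k, k = i ∨ k = j) ∧ σ.rel i j = c ∧ IsQuotient p.rel σ.rel q ∧ q ⁻¹' {i} = D := by
  classical
  obtain ⟨a, ha⟩ := h.nonempty
  obtain ⟨b, hb⟩ := h.nonempty_compl
  obtain ⟨σ, f, hrange, hf⟩ := exists_isPattern p {a, b}
  obtain ⟨i, hi⟩ : a ∈ Set.range f := hrange ▸ Set.mem_insert a {b}
  obtain ⟨j, hj⟩ : b ∈ Set.range f := hrange ▸ Set.mem_insert_of_mem a rfl
  have hij : σ.rel i j = c := by rw [← hf, hi, hj, h.apply_eq a ha b hb]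
  have hlt : i < j := (congrArg Prod.fst hij).mpr hc
  have hall (k : Fin σ.len) : k = i ∨ k = j :=
    (hrange.le (Set.mem_range_self k)).imp (fun hk => injective_of_rel hf (hk.trans hi.symm))
      (fun hk => injective_of_rel hf (hk.trans hj.symm))
  refine ⟨σ, fun x => if x ∈ D then i else j, i, j, hlt, hall, hij, ⟨fun k => ?_, ?_⟩, ?_⟩
  · obtain rfl | rfl := hall k
    exacts [⟨a, if_pos ha⟩, ⟨b, if_neg hb⟩]
  · intro x y hxy
    by_cases hx : x ∈ D <;> by_cases hy : y ∈ D <;> simp only [hx, hy, if_true, if_false] at hxy ⊢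
    · exact absurd rfl hxy
    · rw [h.apply_eq x hx y hy, hij]
    · exact rel_eq_rel_swap (ne_of_mem_of_not_mem hy hx) hlt.ne (by rw [h.apply_eq y hy x hx, hij])
    · exact absurd rfl hxy
  · ext x
    simp [hlt.ne']

end Cuts

/-- The map `q` exhibits `σ` as the skeleton of the canonical decomposition of `p`: a simple
quotient of length at least two. A quotient of length two is not unique; we select the one whose
first fibre is the least. -/
structure IsCanonicalQuotient (p σ : FinPerm) (q : Fin p.len → Fin σ.len) : Prop
    extends IsQuotient p.rel σ.rel q where
  two_le_len : 2 ≤ σ.len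
  isPrimitive : IsPrimitive σ.rel
  minimal : ∀ i j, i < j → (∀ k, k = i ∨ k = j) → Minimal (IsCut (σ.rel i j) p.rel) (q ⁻¹' {i})

/-- The inflation of `σ` by the `α i` is the canonical decomposition of `p`: its parts are nonempty,
`σ` is simple of length at least two and, if `σ` has length two, its first part is not itself the
inflation of `σ` by two nonempty parts. -/
structure IsCanonicalInflation (σ : FinPerm) (α : Fin σ.len → FinPerm) (p : FinPerm) : Prop where
  two_le_len : 2 ≤ σ.len
  isPrimitive : IsPrimitive σ.rel
  len_pos : ∀ i, 0 < (α i).len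
  not_isCut : ∀ i j, i < j → (∀ k, k = i ∨ k = j) → ¬ ∃ E, IsCut (σ.rel i j) (α i).rel E
  isInflation : IsInflation σ α p

theorem exists_isCanonicalQuotient {p : FinPerm} (hp : 2 ≤ p.len) :
    ∃ σ q, IsCanonicalQuotient p σ q := by
  by_cases hcut : ∃ c : Prop × Prop, c.1 ∧ ∃ D, IsCut c p.rel D
  · obtain ⟨c, hc, D₀, hD₀⟩ := hcut
    obtain ⟨D, -, hD⟩ := exists_minimal_le_of_wellFoundedLT _ D₀ hD₀
    obtain ⟨σ, q, i, j, hlt, hall, hij, hq, hqD⟩ := exists_isQuotient_of_isCut hc hD.prop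
    refine ⟨σ, q, hq, Fin.nontrivial_iff_two_le.1 ⟨i, j, hlt.ne⟩, isPrimitive_of_forall_eq_or hall,
      fun i' j' hlt' _ => ?_⟩
    obtain ⟨rfl, rfl⟩ : i' = i ∧ j' = j := by grind [hall i', hall j']
    rwa [hij, hqD]
  · obtain ⟨σ, hσ, hprim, q, hq⟩ := exists_isPrimitive_isQuotient p hp
    exact ⟨σ, q, hq, hσ, hprim, fun i j hlt hall =>
      absurd ⟨_, hlt, _, hq.isCut_preimage hlt.ne hall⟩ hcut⟩

namespace IsCanonicalQuotient

variable {p σ σ' : FinPerm} {q : Fin p.len → Fin σ.len} {q' : Fin p.len → Fin σ'.len}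

theorem isCanonicalInflation (h : IsCanonicalQuotient p σ q) {α : Fin σ.len → FinPerm}
    (hα : ∀ i, IsPattern p (q ⁻¹' {i}) (α i)) : IsCanonicalInflation σ α p := by
  refine ⟨h.two_le_len, h.isPrimitive, fun i => ?_, fun i j hij hall => ?_, h.isInflation hα⟩
  · obtain ⟨f, hrange, -⟩ := hα i
    obtain ⟨x, hx⟩ := h.surjective i
    obtain ⟨y, -⟩ : x ∈ Set.range f := hrange ▸ hx
    exact Fin.pos y
  · obtain ⟨f, hrange, hf⟩ := hα i
    exact ((h.isCut_preimage hij.ne hall).minimal_iff hrange (injective_of_rel hf) hf).1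
      (h.minimal i j hij hall)

theorem apply_eq_iff (h : IsCanonicalQuotient p σ q) (h' : IsCanonicalQuotient p σ' q')
    (x y : Fin p.len) : q x = q y ↔ q' x = q' y := by
  have : Nontrivial (Fin σ.len) := Fin.nontrivial_iff_two_le.2 h.two_le_len
  have : Nontrivial (Fin σ'.len) := Fin.nontrivial_iff_two_le.2 h'.two_le_len
  obtain hbig | ⟨i, j, hlt, hall⟩ :=
    compl_singleton_nontrivial_or_exists_forall_eq_or (Fin σ.len)
  · exact h.apply_eq_iff_of_isPrimitive h'.toIsQuotient h.isPrimitive h'.isPrimitive hbig x y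
  obtain hbig | ⟨i', j', hlt', hall'⟩ :=
    compl_singleton_nontrivial_or_exists_forall_eq_or (Fin σ'.len)
  · exact (h'.apply_eq_iff_of_isPrimitive h.toIsQuotient h'.isPrimitive h.isPrimitive hbig
      x y).symm
  have hD := eq_of_minimal_isCut hlt hlt' (h.minimal i j hlt hall) (h'.minimal i' j' hlt' hall')
  have hx : q x = i ↔ q' x = i' := Set.ext_iff.1 hD x
  have hy : q y = i ↔ q' y = i' := Set.ext_iff.1 hD y
  grind [hall (q x), hall (q y), hall' (q' x), hall' (q' y)]

end IsCanonicalQuotient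

theorem exists_isCanonicalInflation {p : FinPerm} (hp : 2 ≤ p.len) :
    ∃ σ α, IsCanonicalInflation σ α p := by
  obtain ⟨σ, q, hq⟩ := exists_isCanonicalQuotient hp
  choose α hα using fun i => exists_isPattern p (q ⁻¹' {i})
  exact ⟨σ, α, hq.isCanonicalInflation hα⟩

namespace IsCanonicalInflation

variable {σ σ' p : FinPerm} {α : Fin σ.len → FinPerm} {α' : Fin σ'.len → FinPerm}

theorem exists_isCanonicalQuotient (h : IsCanonicalInflation σ α p) :
    ∃ q, IsCanonicalQuotient p σ q ∧ ∀ i, IsPattern p (q ⁻¹' {i}) (α i) := by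
  obtain ⟨q, hq, hα⟩ := h.isInflation.exists_isQuotient h.len_pos
  refine ⟨q, ⟨hq, h.two_le_len, h.isPrimitive, fun i j hij hall => ?_⟩, hα⟩
  obtain ⟨f, hrange, hf⟩ := hα i
  exact ((hq.isCut_preimage hij.ne hall).minimal_iff hrange (injective_of_rel hf) hf).2
    (h.not_isCut i j hij hall)

theorem unique (h : IsCanonicalInflation σ α p) (h' : IsCanonicalInflation σ' α' p) :
    (⟨σ, α⟩ : Σ σ : FinPerm, Fin σ.len → FinPerm) = ⟨σ', α'⟩ := by
  obtain ⟨q, hq, hα⟩ := h.exists_isCanonicalQuotient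
  obtain ⟨q', hq', hα'⟩ := h'.exists_isCanonicalQuotient
  obtain ⟨rfl, hcast⟩ := hq.exists_eq_of_apply_eq_iff hq'.toIsQuotient (hq.apply_eq_iff hq')
  obtain rfl : q' = q := funext hcast
  obtain rfl : α = α' := funext fun i => (hα i).unique (hα' i)
  rfl

theorem skeleton_le (h : IsCanonicalInflation σ α p) : σ ≤ p := by
  obtain ⟨q, hq, -⟩ := h.exists_isCanonicalQuotient
  exact hq.finPerm_le

theorem part_lt (h : IsCanonicalInflation σ α p) (i : Fin σ.len) : α i < p := by
  obtain ⟨q, -, hα⟩ := h.exists_isCanonicalQuotient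
  refine lt_of_le_of_ne (hα i).le fun heq => ?_
  exact (h.isInflation.len_lt h.two_le_len h.len_pos i).ne (congrArg len heq)

end IsCanonicalInflation

end FinPerm

/-! ### Finite bases relative to the substitution closure -/

theorem exists_finite_forall_mem_iff_of_isPWO {A : Type*} [PartialOrder A] [WellFoundedLT A]
    {s t : Set A} (hs : IsLowerSet s) (hpwo : t.IsPWO) :
    ∃ B : Set A, B.Finite ∧ ∀ a ∈ t, a ∈ s ↔ ∀ b ∈ B, ¬ b ≤ a := by
  refine ⟨{b | Minimal (· ∈ t \ s) b}, ?_, fun a ha => ⟨fun has b hb hba => ?_, fun h => ?_⟩⟩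
  · exact (setOfPred_minimal_antichain (· ∈ t \ s)).finite_of_partiallyWellOrderedOn
      (hpwo.mono fun b hb => hb.prop.1)
  · exact hb.prop.2 (hs hba has)
  · by_contra has
    obtain ⟨b, hba, hb⟩ := exists_minimal_le_of_wellFoundedLT (· ∈ t \ s) a ⟨ha, has⟩
    exact h b hb hba

open Set.PartiallyWellOrderedOn in
theorem isPWO_setOf_exists_lt_of_isMinBadSeq {A : Type*} [Preorder A] {rk : A → ℕ}
    (hrk : StrictMono rk) {s : Set A} (hs : IsLowerSet s) {f : ℕ → A} (hf : IsBadSeq (· ≤ ·) s f)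
    (hmin : ∀ n, IsMinBadSeq (· ≤ ·) rk s n f) : {a | ∃ n, a < f n}.IsPWO := by
  refine (iff_forall_not_isBadSeq _ _).2 ?_
  rintro g ⟨hg, hbad⟩
  choose ν hν using hg
  obtain ⟨k₀, hk₀⟩ : ∃ k₀, ∀ k, ν k₀ ≤ ν k :=
    ⟨Function.argmin ν, fun k => Function.argmin_le ν k⟩
  let g' (m : ℕ) : A := if m < ν k₀ then f m else g (k₀ + (m - ν k₀))
  have hg'f {m : ℕ} (hm : m < ν k₀) : g' m = f m := if_pos hm
  have hg'g {m : ℕ} (hm : ¬ m < ν k₀) : g' m = g (k₀ + (m - ν k₀)) := if_neg hm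
  refine hmin (ν k₀) g' (fun m hm => (hg'f hm).symm) ?_ ⟨fun m => ?_, fun m n hmn hle => ?_⟩
  · simpa [hg'g (lt_irrefl _)] using hrk (hν k₀)
  · by_cases hm : m < ν k₀
    · exact hg'f hm ▸ hf.1 m
    · exact hg'g hm ▸ hs (hν _).le (hf.1 _)
  · by_cases hn : n < ν k₀
    · exact hf.2 m n hmn (by rwa [← hg'f (hmn.trans hn), ← hg'f hn])
    · rw [hg'g hn] at hle
      by_cases hm : m < ν k₀
      · exact hf.2 _ _ (hm.trans_le (hk₀ _)) ((hg'f hm ▸ hle).trans (hν _).le)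
      · exact hbad _ _ (by omega) (hg'g hm ▸ hle)

namespace FinPerm

/-- The simple permutations in `𝒞` of length at least two. -/
def simples (𝒞 : Set FinPerm) : Set FinPerm := {σ ∈ 𝒞 | 2 ≤ σ.len ∧ IsPrimitive σ.rel}

/-- The substitution closure of a permutation class `𝒞`: the class of all permutations whose simple
patterns of length at least two belong to `𝒞`. -/
def substClosure (𝒞 : Set FinPerm) : Set FinPerm :=
  {p | ∀ τ ≤ p, 2 ≤ τ.len → IsPrimitive τ.rel → τ ∈ 𝒞}

variable {𝒞 : Set FinPerm}

theorem isLowerSet_substClosure (𝒞 : Set FinPerm) : IsLowerSet (substClosure 𝒞) :=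
  fun _ _ hle hp τ hτ => hp τ (hτ.trans hle)

theorem subset_substClosure (h𝒞 : IsLowerSet 𝒞) : 𝒞 ⊆ substClosure 𝒞 :=
  fun _ hp _ hτ _ _ => h𝒞 hτ hp

theorem mem_substClosure_of_len_le_one {p : FinPerm} (hp : p.len ≤ 1) : p ∈ substClosure 𝒞 :=
  fun _ hτ h2 => absurd (h2.trans (len_strictMono.monotone hτ)) (by omega)

theorem IsCanonicalInflation.mem_simples {σ p : FinPerm} {α : Fin σ.len → FinPerm}
    (h : IsCanonicalInflation σ α p) (hp : p ∈ substClosure 𝒞) : σ ∈ simples 𝒞 :=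
  ⟨hp σ h.skeleton_le h.two_le_len h.isPrimitive, h.two_le_len, h.isPrimitive⟩

theorem IsInflation.mem_substClosure (h𝒞 : IsLowerSet 𝒞) {σ p : FinPerm} {α : Fin σ.len → FinPerm}
    (h : IsInflation σ α p) (hσ : σ ∈ 𝒞) (hpos : ∀ i, 0 < (α i).len)
    (hα : ∀ i, α i ∈ substClosure 𝒞) : p ∈ substClosure 𝒞 := by
  intro τ hτ h2 hprim
  obtain ⟨f, hf⟩ := le_iff.1 hτ
  obtain ⟨q, hq, hqα⟩ := h.exists_isQuotient hpos
  by_cases hinj : Function.Injective (q ∘ f)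
  · refine h𝒞 (le_iff.2 ⟨q ∘ f, fun x y => ?_⟩) hσ
    obtain rfl | hxy := eq_or_ne x y
    · simp [rel]
    · rw [← hf, hq.apply_eq _ _ (hinj.ne hxy)]
      rfl
  · obtain ⟨x, y, hqxy, hxy⟩ := Function.not_injective_iff.1 hinj
    have hfibre : f ⁻¹' (q ⁻¹' {q (f x)}) = Set.univ :=
      hprim.eq_univ ((hq.preimage_isClan (isClan_singleton _ _)).preimage hf) rfl hqxy.symm hxy
    exact hα _ τ ((hqα _).le_of_forall_mem (fun z => hfibre.ge (Set.mem_univ z)) hf) h2 hprim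

open Set.PartiallyWellOrderedOn in
theorem isPWO_substClosure (hfin : (simples 𝒞).Finite) : (substClosure 𝒞).IsPWO := by
  refine (iff_not_exists_isMinBadSeq len).2 ?_
  rintro ⟨f, hf, hmin⟩
  have hlen (n : ℕ) : 2 ≤ (f n).len := by
    have hbad (n : ℕ) : 1 < (f n).len ∨ (f (n + 1)).len < (f n).len := by
      by_contra! h
      exact hf.2 n _ n.lt_succ_self (le_of_len_le_one h.1 h.2)
    have h₀ := hbad n
    have h₁ := hbad (n + 1)
    omega
  choose σ α hα using fun n => exists_isCanonicalInflation (hlen n)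
  obtain ⟨g, hg⟩ := (hfin.partiallyWellOrderedOn (r := Eq)).exists_monotone_subseq
    fun n => (hα n).mem_simples (hf.1 n)
  have hdec (k : ℕ) : ∃ β : Fin (σ (g 0)).len → FinPerm,
      IsInflation (σ (g 0)) β (f (g k)) ∧ ∀ i, ∃ n, β i < f n := by
    rw [hg 0 k (Nat.zero_le k)]
    exact ⟨α (g k), (hα _).isInflation, fun i => ⟨g k, (hα _).part_lt i⟩⟩
  choose β hβ hβf using hdec
  have hparts := isPWO_setOf_exists_lt_of_isMinBadSeq len_strictMono (isLowerSet_substClosure 𝒞)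
    hf hmin
  obtain ⟨k, l, hkl, hle⟩ := (Set.PartiallyWellOrderedOn.pi fun _ : Fin (σ (g 0)).len => hparts)
    |>.exists_lt (f := β) fun k i _ => hβf k i
  exact hf.2 _ _ (g.lt_iff_lt.2 hkl) ((hβ k).mono (hβ l) hle)

end FinPerm

/-! ### First-order properties of permutations -/

namespace FinPerm

/-- First-order definable properties of permutations with marked indices. Over a finite relational
signature these are the properties invariant under Ehrenfeucht–Fraïssé equivalence of some rank,
which we take as the definition. -/
def IsFirstOrder {ι : Type} (φ : ∀ p : FinPerm, (ι → Fin p.len) → Prop) : Prop :=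
  ∃ r, ∀ (p p' : FinPerm) (a : ι → Fin p.len) (a' : ι → Fin p'.len),
    EFEquiv p.rel p'.rel r (Set.range fun i => (a i, a' i)) → φ p a → φ p' a'

namespace IsFirstOrder

variable {ι κ : Type} {φ ψ : ∀ p : FinPerm, (ι → Fin p.len) → Prop}

theorem of_rel (h : ∀ (p p' : FinPerm) (a : ι → Fin p.len) (a' : ι → Fin p'.len),
    (∀ i j, p.rel (a i) (a j) = p'.rel (a' i) (a' j)) → φ p a → φ p' a') : IsFirstOrder φ :=
  ⟨0, fun p p' a a' he => h p p' a a' fun i j =>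
    he.isPartialIso _ (Set.mem_range_self i) _ (Set.mem_range_self j)⟩

theorem not (h : IsFirstOrder φ) : IsFirstOrder fun p a => ¬ φ p a := by
  obtain ⟨r, hr⟩ := h
  refine ⟨r, fun p p' a a' he hφ hφ' => hφ (hr p' p a' a ?_ hφ')⟩
  convert he.symm using 1
  ext ⟨x, y⟩
  simp [and_comm]

theorem forall_finite {α : Type*} [Finite α] {φ : α → ∀ p : FinPerm, (ι → Fin p.len) → Prop}
    (h : ∀ i, IsFirstOrder (φ i)) : IsFirstOrder fun p a => ∀ i, φ i p a := by
  have := Fintype.ofFinite α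
  choose r hr using h
  refine ⟨Finset.univ.sup r, fun p p' a a' he hφ i => hr i p p' a a' ?_ (hφ i)⟩
  exact he.of_le (Finset.le_sup (Finset.mem_univ i))

theorem and (hφ : IsFirstOrder φ) (hψ : IsFirstOrder ψ) :
    IsFirstOrder fun p a => φ p a ∧ ψ p a := by
  have := forall_finite (φ := fun b : Bool => cond b φ ψ) (Bool.forall_bool.2 ⟨hψ, hφ⟩)
  simpa only [Bool.forall_bool, cond_true, cond_false, and_comm] using this

theorem imp (hφ : IsFirstOrder φ) (hψ : IsFirstOrder ψ) :
    IsFirstOrder fun p a => φ p a → ψ p a := by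
  simpa only [not_and, not_not] using (hφ.and hψ.not).not

theorem exists_tuple [Finite κ] {φ : ∀ p : FinPerm, (ι ⊕ κ → Fin p.len) → Prop}
    (h : IsFirstOrder φ) : IsFirstOrder fun p a => ∃ b, φ p (Sum.elim a b) := by
  have := Fintype.ofFinite κ
  obtain ⟨r, hr⟩ := h
  refine ⟨r + Fintype.card κ, fun p p' a a' he ⟨b, hb⟩ => ?_⟩
  obtain ⟨b', hb'⟩ := he.exists_extend b
  refine ⟨b', hr _ _ _ _ ?_ hb⟩
  convert hb' using 1
  ext x
  simp

theorem forall_tuple [Finite κ] {φ : ∀ p : FinPerm, (ι ⊕ κ → Fin p.len) → Prop}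
    (h : IsFirstOrder φ) : IsFirstOrder fun p a => ∀ b, φ p (Sum.elim a b) := by
  simpa only [not_exists, not_not] using h.not.exists_tuple.not

end IsFirstOrder

theorem isFirstOrder_le (σ : FinPerm) : IsFirstOrder (ι := Empty) fun p _ => σ ≤ p := by
  simp only [le_iff]
  refine IsFirstOrder.exists_tuple (ι := Empty) (κ := Fin σ.len)
    (φ := fun p a => ∀ x y, p.rel (a (.inr x)) (a (.inr y)) = σ.rel x y) ?_
  exact .of_rel fun p p' a a' h hφ x y => by rw [← h, hφ]

theorem containsBlocked_iff {p : FinPerm} {k : ℕ} {σ : Perm k} {D : Set ℕ} :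
    ContainsBlocked p.perm σ D ↔ ∃ f : Fin k → Fin p.len,
      (∀ s t, p.rel (f s) (f t) = (s < t, σ s < σ t)) ∧
        ∀ c : Unit → Fin p.len, ∀ s t : Fin k, (t : ℕ) ∈ D → (t : ℕ) = s + 1 →
          ¬ (f s < c () ∧ c () < f t) := by
  simp only [← strictMono_and_forall_lt_iff, ContainsBlocked, ← and_assoc]
  refine exists_congr fun f => and_congr_right fun ⟨hf, _⟩ => ⟨?_, fun h s hs h1 h2 => ?_⟩
  · rintro h c s t ht hst ⟨hsc, hct⟩
    have hs : (⟨t - 1, by omega⟩ : Fin k) = s := Fin.ext (Nat.eq_sub_of_add_eq hst.symm).symm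
    have hadj := h t ht (by omega) t.2
    rw [Fin.eta, hs] at hadj
    rw [Fin.lt_def] at hsc hct
    omega
  · have hlt : f ⟨s - 1, by omega⟩ < f ⟨s, h2⟩ := hf (Fin.mk_lt_mk.2 (by omega))
    by_contra hne
    refine h (fun _ => ⟨f ⟨s - 1, by omega⟩ + 1, by omega⟩) ⟨s - 1, by omega⟩ ⟨s, h2⟩ hs
      (Nat.sub_add_cancel h1).symm ⟨?_, ?_⟩ <;>
    · simp only [Fin.lt_def] at hlt ⊢
      omega

theorem isFirstOrder_containsBlocked {k : ℕ} (σ : Perm k) (D : Set ℕ) :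
    IsFirstOrder (ι := Empty) fun p _ => ContainsBlocked p.perm σ D := by
  simp only [containsBlocked_iff]
  refine IsFirstOrder.exists_tuple (ι := Empty) (κ := Fin k)
    (φ := fun p a => (∀ s t, p.rel (a (.inr s)) (a (.inr t)) = (s < t, σ s < σ t)) ∧
      ∀ c : Unit → Fin p.len, ∀ s t : Fin k, (t : ℕ) ∈ D → (t : ℕ) = s + 1 →
        ¬ (a (.inr s) < c () ∧ c () < a (.inr t))) (.and ?_ ?_)
  · exact .of_rel fun p p' a a' h hφ s t => by rw [← h, hφ]
  · refine IsFirstOrder.forall_tuple (ι := Empty ⊕ Fin k) (κ := Unit)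
      (φ := fun p a => ∀ s t : Fin k, (t : ℕ) ∈ D → (t : ℕ) = s + 1 →
        ¬ (a (Sum.inl (Sum.inr s)) < a (.inr ()) ∧ a (.inr ()) < a (Sum.inl (Sum.inr t)))) ?_
    exact .of_rel fun p p' a a' h hφ => by simpa only [(rel_eq_iff.1 (h _ _)).1] using hφ

theorem isFirstOrder_avoidsBarred {k : ℕ} (σ : Perm k) (S : Set (Fin k)) :
    IsFirstOrder (ι := Empty) fun p _ => AvoidsBarred p.perm σ S := by
  simp only [AvoidsBarred, ← and_assoc, ← and_imp, strictMono_and_forall_lt_iff]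
  refine IsFirstOrder.forall_tuple (ι := Empty) (κ := {s : Fin k // s ∉ S})
    (φ := fun p a => (∀ s t, p.rel (a (.inr s)) (a (.inr t)) = (s < t, σ s.1 < σ t.1)) →
      ∃ f : Fin k → Fin p.len, (∀ s t, p.rel (f s) (f t) = (s < t, σ s < σ t)) ∧
        ∀ s : {s : Fin k // s ∉ S}, f s.1 = a (.inr s)) (.imp ?_ ?_)
  · exact .of_rel fun p p' a a' h hφ s t => by rw [← h, hφ]
  · simp only [← rel_comm_iff]
    refine IsFirstOrder.exists_tuple (ι := Empty ⊕ {s : Fin k // s ∉ S}) (κ := Fin k)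
      (φ := fun p a => (∀ s t, p.rel (a (.inr s)) (a (.inr t)) = (s < t, σ s < σ t)) ∧
        ∀ s : {s : Fin k // s ∉ S}, p.rel (a (.inr s.1)) (a (Sum.inl (Sum.inr s))) =
          p.rel (a (Sum.inl (Sum.inr s))) (a (.inr s.1))) ?_
    exact .of_rel fun p p' a a' h hφ => by simpa only [h] using hφ

theorem exists_isCut_iff {p : FinPerm} {c : Prop × Prop} (hc : c.1) :
    (∃ D, IsCut c p.rel D) ↔ ∃ a : Fin 2 → Fin p.len, a 0 < a 1 ∧
      ∀ b : Fin 2 → Fin p.len, ¬ a 0 < b 0 → a 0 < b 1 → p.rel (b 0) (b 1) = c := by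
  constructor
  · rintro ⟨D, hD⟩
    have hlower := isLowerSet_of_isCut hc hD
    obtain ⟨x, hx, hmax⟩ := D.toFinite.exists_maximal hD.nonempty
    obtain ⟨y, hy⟩ := hD.nonempty_compl
    refine ⟨![x, y], not_le.1 fun hle => hy (hlower hle hx), fun b hb₀ hb₁ => ?_⟩
    exact hD.apply_eq _ (hlower (not_lt.1 hb₀) hx) _ fun hb => hb₁.not_ge (hmax hb hb₁.le)
  · rintro ⟨a, ha, h⟩
    exact ⟨Set.Iic (a 0), ⟨a 0, Set.self_mem_Iic⟩, ⟨a 1, ha.not_ge⟩, fun x hx y hy =>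
      h ![x, y] (not_lt.2 hx) (not_le.1 hy)⟩

theorem isFirstOrder_exists_isCut {c : Prop × Prop} (hc : c.1) :
    IsFirstOrder (ι := Empty) fun p _ => ∃ D, IsCut c p.rel D := by
  simp only [exists_isCut_iff hc]
  refine IsFirstOrder.exists_tuple (ι := Empty) (κ := Fin 2)
    (φ := fun p a => a (.inr 0) < a (.inr 1) ∧ ∀ b : Fin 2 → Fin p.len, ¬ a (.inr 0) < b 0 →
      a (.inr 0) < b 1 → p.rel (b 0) (b 1) = c) (.and ?_ ?_)
  · exact .of_rel fun p p' a a' h => (rel_eq_iff.1 (h _ _)).1.1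
  · refine IsFirstOrder.forall_tuple (ι := Empty ⊕ Fin 2) (κ := Fin 2)
      (φ := fun p a => ¬ a (Sum.inl (Sum.inr 0)) < a (.inr 0) →
        a (Sum.inl (Sum.inr 0)) < a (.inr 1) → p.rel (a (.inr 0)) (a (.inr 1)) = c) ?_
    refine .of_rel fun p p' a a' h hφ => ?_
    rwa [← (rel_eq_iff.1 (h _ _)).1, ← (rel_eq_iff.1 (h _ _)).1, ← h]

theorem IsFirstOrder.exists_rank {P : FinPerm → Prop}
    (h : IsFirstOrder (ι := Empty) fun p _ => P p) :
    ∃ r₀, ∀ r ≥ r₀, ∀ p p', colouringType r p.rel = colouringType r p'.rel → (P p ↔ P p') := by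
  obtain ⟨r₀, hr₀⟩ := h
  have himp {r : ℕ} (hr : r₀ ≤ r) {p p' : FinPerm}
      (he : colouringType r p.rel = colouringType r p'.rel) : P p → P p' := by
    refine hr₀ p p' Empty.elim Empty.elim ?_
    rw [Set.range_eq_empty]
    exact (colouringType_eq_iff.1 he).of_le hr
  exact ⟨r₀, fun r hr p p' he => ⟨himp hr he, himp hr he.symm⟩⟩

end FinPerm

/-! ### Counting permutations by type -/

namespace FinPerm

variable {𝒞 : Set FinPerm} {r : ℕ}

/-- The nonempty permutations of rank `r` type `t` in the substitution closure of `𝒞`. -/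
def typeClass (𝒞 : Set FinPerm) (r : ℕ) (t : QType (Prop × Prop) r 0) : Set FinPerm :=
  {p ∈ substClosure 𝒞 | 0 < p.len ∧ colouringType r p.rel = t}

/-- A simple skeleton from `𝒞` whose indices are labelled by types of rank `r`. -/
abbrev LabelledSkeleton (𝒞 : Set FinPerm) (r : ℕ) :=
  Σ σ : simples 𝒞, Fin σ.1.len → QType (Prop × Prop) r 0

/-- The permutations whose canonical decomposition has the skeleton of `γ`, with parts in the type
classes given by the labels of `γ`. -/
def skeletonClass (γ : LabelledSkeleton 𝒞 r) : Set FinPerm :=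
  {p | ∃ α, IsCanonicalInflation γ.1 α p ∧ ∀ i, α i ∈ typeClass 𝒞 r (γ.2 i)}

/-- The types of rank `r` decide which permutations have a cut of a given colour. The colours
with first component true are those of the cuts into a left and a right part. -/
def DecidesCuts (r : ℕ) : Prop :=
  ∀ ⦃c : Prop × Prop⦄, c.1 → ∀ ⦃p p' : FinPerm⦄, colouringType r p.rel = colouringType r p'.rel →
    ((∃ D, IsCut c p.rel D) ↔ ∃ D, IsCut c p'.rel D)

theorem exists_forall_decidesCuts : ∃ r₀, ∀ r ≥ r₀, DecidesCuts r := by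
  choose r₀ hr₀ using fun c : {c : Prop × Prop // c.1} =>
    (isFirstOrder_exists_isCut c.2).exists_rank
  have := Fintype.ofFinite {c : Prop × Prop // c.1}
  exact ⟨Finset.univ.sup r₀, fun r hr c hc p p' =>
    hr₀ ⟨c, hc⟩ r ((Finset.le_sup (Finset.mem_univ _)).trans hr) p p'⟩

theorem IsCanonicalInflation.of_colouringType_eq (hr : DecidesCuts r) {σ p p' : FinPerm}
    {α α' : Fin σ.len → FinPerm} (h : IsCanonicalInflation σ α p) (h' : IsInflation σ α' p')
    (hpos : ∀ i, 0 < (α' i).len)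
    (hα : ∀ i, colouringType r (α i).rel = colouringType r (α' i).rel) :
    IsCanonicalInflation σ α' p' :=
  ⟨h.two_le_len, h.isPrimitive, hpos,
    fun i j hij hall hcut => h.not_isCut i j hij hall ((hr hij (hα i)).2 hcut), h'⟩

theorem colouringType_eq_of_mem_skeletonClass {γ : LabelledSkeleton 𝒞 r} {p p' : FinPerm}
    (hp : p ∈ skeletonClass γ) (hp' : p' ∈ skeletonClass γ) :
    colouringType r p.rel = colouringType r p'.rel := by
  obtain ⟨α, hα, ht⟩ := hp
  obtain ⟨α', hα', ht'⟩ := hp'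
  exact hα.isInflation.colouringType_eq hα'.isInflation fun i => (ht i).2.2.trans (ht' i).2.2.symm

theorem two_le_len_of_mem_skeletonClass {γ : LabelledSkeleton 𝒞 r} {p : FinPerm}
    (hp : p ∈ skeletonClass γ) : 2 ≤ p.len := by
  obtain ⟨α, hα, -⟩ := hp
  exact hα.two_le_len.trans (len_strictMono.monotone hα.skeleton_le)

theorem skeletonClass_subset_substClosure (h𝒞 : IsLowerSet 𝒞) (γ : LabelledSkeleton 𝒞 r) :
    skeletonClass γ ⊆ substClosure 𝒞 := by
  rintro p ⟨α, hα, ht⟩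
  exact hα.isInflation.mem_substClosure h𝒞 γ.1.2.1 hα.len_pos fun i => (ht i).1

theorem exists_mem_skeletonClass {p : FinPerm} (hp : p ∈ substClosure 𝒞) (hlen : 2 ≤ p.len) :
    ∃ γ : LabelledSkeleton 𝒞 r, p ∈ skeletonClass γ := by
  obtain ⟨σ, α, hα⟩ := exists_isCanonicalInflation hlen
  refine ⟨⟨⟨σ, hα.mem_simples hp⟩, fun i => colouringType r (α i).rel⟩, α, hα, fun i => ?_⟩
  exact ⟨isLowerSet_substClosure 𝒞 (hα.part_lt i).le hp, hα.len_pos i, rfl⟩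

theorem pairwise_disjoint_skeletonClass :
    Pairwise (Function.onFun Disjoint (skeletonClass : LabelledSkeleton 𝒞 r → Set FinPerm)) := by
  rintro ⟨⟨σ, hσ⟩, c⟩ ⟨⟨σ', hσ'⟩, c'⟩ hne
  refine Set.disjoint_left.2 ?_
  rintro p ⟨α, hα, ht⟩ ⟨α', hα', ht'⟩
  obtain ⟨rfl, hαα'⟩ := Sigma.mk.inj (hα.unique hα')
  obtain rfl := eq_of_heq hαα'
  obtain rfl : c = c' := funext fun i => (ht i).2.2.symm.trans (ht' i).2.2
  exact hne rfl

/-- The labelled skeletons of the permutations of type `t` in the substitution closure of `𝒞`. -/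
abbrev skeletonsOfType (𝒞 : Set FinPerm) (r : ℕ) (t : QType (Prop × Prop) r 0) :
    Set (LabelledSkeleton 𝒞 r) :=
  {γ | (skeletonClass γ ∩ typeClass 𝒞 r t).Nonempty}

theorem typeClass_eq (h𝒞 : IsLowerSet 𝒞) (t : QType (Prop × Prop) r 0) :
    typeClass 𝒞 r t = {p | p.len = 1 ∧ colouringType r p.rel = t} ∪
      ⋃ γ : skeletonsOfType 𝒞 r t, skeletonClass γ.1 := by
  ext p
  simp only [Set.mem_union, Set.mem_iUnion, Set.mem_ofPred_eq]
  constructor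
  · rintro ⟨hp, hpos, ht⟩
    obtain hlen | hlen : p.len = 1 ∨ 2 ≤ p.len := by omega
    · exact .inl ⟨hlen, ht⟩
    · obtain ⟨γ, hγ⟩ := exists_mem_skeletonClass hp hlen
      exact .inr ⟨⟨γ, p, hγ, hp, hpos, ht⟩, hγ⟩
  · rintro (⟨hlen, ht⟩ | ⟨⟨γ, p₀, hγ₀, _, _, ht⟩, hγ⟩)
    · exact ⟨mem_substClosure_of_len_le_one hlen.le, by omega, ht⟩
    · have := two_le_len_of_mem_skeletonClass hγ
      exact ⟨skeletonClass_subset_substClosure h𝒞 γ hγ, by omega,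
        (colouringType_eq_of_mem_skeletonClass hγ hγ₀).trans ht⟩

section GeneratingFunctions

variable {R : Type*}

theorem sizeGenFun_skeletonClass [CommSemiring R] (hr : DecidesCuts r) {γ : LabelledSkeleton 𝒞 r}
    (hγ : (skeletonClass γ).Nonempty) :
    sizeGenFun R len (skeletonClass γ) = ∏ i, sizeGenFun R len (typeClass 𝒞 r (γ.2 i)) := by
  obtain ⟨p₀, α₀, hα₀, ht₀⟩ := hγ
  choose inflate h_inflate using exists_isInflation γ.1.1
  have hcan {α : Fin γ.1.1.len → FinPerm} (hα : ∀ i, α i ∈ typeClass 𝒞 r (γ.2 i)) :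
      IsCanonicalInflation γ.1 α (inflate α) :=
    hα₀.of_colouringType_eq hr (h_inflate α) (fun i => (hα i).2.1) fun i =>
      (ht₀ i).2.2.trans (hα i).2.2.symm
  rw [← sizeGenFun.pi fun _ => finite_len_preimage]
  symm
  refine sizeGenFun.congr_bijOn (f := inflate) ⟨fun α hα => ?_, fun α hα α' hα' h => ?_, ?_⟩
    fun α _ => (h_inflate α).len_eq
  · rw [Set.mem_univ_pi] at hα
    exact ⟨α, hcan hα, hα⟩
  · rw [Set.mem_univ_pi] at hα hα'
    exact sigma_mk_injective ((hcan hα).unique (h ▸ hcan hα'))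
  · rintro p ⟨α, hα, ht⟩
    exact ⟨α, Set.mem_univ_pi.2 ht, (h_inflate α).unique hα.isInflation⟩

theorem sizeGenFun_typeClass [CommSemiring R] (h𝒞 : IsLowerSet 𝒞) (hr : DecidesCuts r)
    (t : QType (Prop × Prop) r 0) [Fintype (skeletonsOfType 𝒞 r t)] :
    sizeGenFun R len (typeClass 𝒞 r t) =
      sizeGenFun R len {p : FinPerm | p.len = 1 ∧ colouringType r p.rel = t} +
        ∑ γ : skeletonsOfType 𝒞 r t, ∏ i, sizeGenFun R len (typeClass 𝒞 r (γ.1.2 i)) := by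
  have hdisj : Pairwise (Function.onFun Disjoint
      fun γ : skeletonsOfType 𝒞 r t => skeletonClass γ.1) :=
    fun _ _ hne => pairwise_disjoint_skeletonClass (Subtype.coe_injective.ne hne)
  conv_lhs => rw [typeClass_eq h𝒞 t]
  rw [sizeGenFun.union finite_len_preimage, sizeGenFun.iUnion finite_len_preimage hdisj]
  · exact congrArg _ (Finset.sum_congr rfl fun γ _ => sizeGenFun_skeletonClass hr γ.2.left)
  · refine Set.disjoint_iUnion_right.2 fun γ => Set.disjoint_left.2 fun p ⟨hlen, _⟩ hp => ?_
    have := two_le_len_of_mem_skeletonClass hp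
    omega

variable {k : Type*} [Field k]

theorem isAlgebraic_sizeGenFun_typeClass (h𝒞 : IsLowerSet 𝒞) (hfin : (simples 𝒞).Finite)
    (hr : DecidesCuts r) (t : QType (Prop × Prop) r 0) :
    IsAlgebraic (Polynomial k) (sizeGenFun k len (typeClass 𝒞 r t)) := by
  have := hfin.to_subtype
  have := QType.finite (Prop × Prop) r 0
  have := fun t => Fintype.ofFinite (skeletonsOfType 𝒞 r t)
  have (t : QType (Prop × Prop) r 0) (γ : skeletonsOfType 𝒞 r t) : Nontrivial (Fin γ.1.1.1.len) :=
    Fin.nontrivial_iff_two_le.2 γ.1.1.2.2.1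
  choose P hP using fun t : QType (Prop × Prop) r 0 => sizeGenFun.exists_eq_coe (R := k)
    ((finite_len_preimage 1).subset fun p (hp : p.len = 1 ∧ colouringType r p.rel = t) => hp.1) len
  refine isAlgebraic_of_powerSeries_system (fun t (γ : skeletonsOfType 𝒞 r t) => γ.1.2) P
    (fun t => sizeGenFun k len (typeClass 𝒞 r t)) (fun t => ?_) (fun t => ?_) t
  · exact sizeGenFun.constantCoeff_eq_zero fun p hp => hp.2.1.ne'
  · exact (sizeGenFun_typeClass h𝒞 hr t).trans (congrArg (· + _) (hP t))

variable {P : FinPerm → Prop}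

theorem isAlgebraic_sizeGenFun_substClosure (h𝒞 : IsLowerSet 𝒞) (hfin : (simples 𝒞).Finite)
    (hP : IsFirstOrder (ι := Empty) fun p _ => P p) :
    IsAlgebraic (Polynomial k) (sizeGenFun k len {p ∈ substClosure 𝒞 | 0 < p.len ∧ P p}) := by
  obtain ⟨r₁, hr₁⟩ := exists_forall_decidesCuts
  obtain ⟨r₂, hr₂⟩ := hP.exists_rank
  let r := max r₁ r₂
  have := QType.finite (Prop × Prop) r 0
  have := Fintype.ofFinite {t // ∃ p ∈ typeClass 𝒞 r t, P p}
  have hunion : {p ∈ substClosure 𝒞 | 0 < p.len ∧ P p} =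
      ⋃ t : {t // ∃ p ∈ typeClass 𝒞 r t, P p}, typeClass 𝒞 r t := by
    ext p
    simp only [Set.mem_iUnion]
    constructor
    · rintro ⟨hp, hpos, hPp⟩
      exact ⟨⟨_, p, ⟨hp, hpos, rfl⟩, hPp⟩, hp, hpos, rfl⟩
    · rintro ⟨⟨t, p₀, hp₀, hPp₀⟩, hp, hpos, ht⟩
      exact ⟨hp, hpos, (hr₂ r (le_max_right _ _) _ _ (hp₀.2.2.trans ht.symm)).1 hPp₀⟩
  have hdisj : Pairwise (Function.onFun Disjoint
      fun t : {t // ∃ p ∈ typeClass 𝒞 r t, P p} => typeClass 𝒞 r t) := fun t t' hne =>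
    Set.disjoint_left.2 fun p hp hp' => hne (Subtype.ext (hp.2.2.symm.trans hp'.2.2))
  rw [hunion, sizeGenFun.iUnion finite_len_preimage hdisj]
  exact Finset.sum_induction _ _ (fun _ _ => IsAlgebraic.add) isAlgebraic_zero fun t _ =>
    isAlgebraic_sizeGenFun_typeClass h𝒞 hfin (hr₁ r (le_max_left _ _)) t.1

theorem isAlgebraic_sizeGenFun (h𝒞 : IsLowerSet 𝒞) (hfin : (simples 𝒞).Finite)
    (hP : IsFirstOrder (ι := Empty) fun p _ => P p) :
    IsAlgebraic (Polynomial k) (sizeGenFun k len {p ∈ 𝒞 | 0 < p.len ∧ P p}) := by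
  obtain ⟨B, hB, hmem⟩ := exists_finite_forall_mem_iff_of_isPWO h𝒞 (isPWO_substClosure hfin)
  have := hB.to_subtype
  convert isAlgebraic_sizeGenFun_substClosure h𝒞 hfin
    (P := fun p => (∀ b : B, ¬ b.1 ≤ p) ∧ P p)
    ((IsFirstOrder.forall_finite fun b : B => (isFirstOrder_le b.1).not).and hP) using 2
  ext p
  constructor
  · rintro ⟨hp, hpos, hPp⟩
    have hp' := subset_substClosure h𝒞 hp
    exact ⟨hp', hpos, fun b => (hmem p hp').1 hp b b.2, hPp⟩
  · rintro ⟨hp, hpos, hbasis, hPp⟩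
    exact ⟨(hmem p hp).2 fun b hb => hbasis ⟨b, hb⟩, hpos, hPp⟩

end GeneratingFunctions

end FinPerm

/-! ### Permutation classes with finitely many simple permutations -/

theorem IsRange.lt_iff_lt {n : ℕ} {I : Finset (Fin n)} (hI : IsRange I) {a b c : Fin n}
    (ha : a ∈ I) (hb : b ∈ I) (hc : c ∉ I) : (a < c ↔ b < c) ∧ (c < a ↔ c < b) := by
  have hab : ¬ (a ≤ c ∧ c ≤ b) := fun h => hc (hI ha hb h.1 h.2)
  have hba : ¬ (b ≤ c ∧ c ≤ a) := fun h => hc (hI hb ha h.1 h.2)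
  grind

namespace FinPerm

theorem isClan_of_isPermInterval {p : FinPerm} {I : Finset (Fin p.len)}
    (hI : IsPermInterval p.perm I) : IsClan p.rel (I : Set (Fin p.len)) := by
  intro a ha b hb c hc
  obtain ⟨hac, hca⟩ := hI.1.lt_iff_lt ha hb hc
  obtain ⟨hac', hca'⟩ := hI.2.lt_iff_lt (Finset.mem_image_of_mem _ ha)
    (Finset.mem_image_of_mem _ hb) (mt p.perm.injective.mem_finset_image.1 hc)
  exact ⟨rel_eq_iff.2 ⟨hac, hac'⟩, rel_eq_iff.2 ⟨hca, hca'⟩⟩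

theorem isSimple_of_isPrimitive {p : FinPerm} (hp : IsPrimitive p.rel) : IsSimple p.perm := by
  intro I hI
  refine (hp I (isClan_of_isPermInterval hI)).imp (fun h => ?_) fun h => ?_
  · exact Finset.card_le_one.2 fun a ha b hb => h ha hb
  · rw [Finset.coe_eq_univ.1 h, Finset.card_univ, Fintype.card_fin]

theorem isLowerSet_of_isPermClass {C : ∀ n, Set (Perm n)} (hC : IsPermClass C) :
    IsLowerSet {p : FinPerm | p.perm ∈ C p.len} :=
  fun _ _ hle hp => hC _ _ hp hle

theorem finite_simples_of_finitelyManySimples {C : ∀ n, Set (Perm n)}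
    (hC : FinitelyManySimples C) : (simples {p : FinPerm | p.perm ∈ C p.len}).Finite := by
  refine (hC.image fun p => ⟨p.1, p.2⟩).subset fun p hp => ?_
  exact ⟨⟨p.len, p.perm⟩, ⟨hp.1, isSimple_of_isPrimitive hp.2.2⟩, rfl⟩

theorem genFun_eq_sizeGenFun (S : ∀ n, Set (Perm n)) :
    genFun S = sizeGenFun ℚ len {p : FinPerm | 0 < p.len ∧ p.perm ∈ S p.len} := by
  ext n
  rw [genFun, sizeGenFun, PowerSeries.coeff_mk, PowerSeries.coeff_mk]
  split_ifs with hn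
  · subst hn
    have hempty : {p : FinPerm | 0 < p.len ∧ p.perm ∈ S p.len} ∩ len ⁻¹' {0} = ∅ :=
      Set.eq_empty_of_forall_notMem fun p hp => hp.1.1.ne' hp.2
    rw [hempty, Set.ncard_empty, Nat.cast_zero]
  · have himage : FinPerm.mk n '' S n =
        {p : FinPerm | 0 < p.len ∧ p.perm ∈ S p.len} ∩ len ⁻¹' {n} := by
      refine Set.Subset.antisymm ?_ ?_
      · rintro _ ⟨π, hπ, rfl⟩
        exact ⟨⟨Nat.pos_of_ne_zero hn, hπ⟩, rfl⟩
      · rintro p ⟨⟨-, hp⟩, rfl⟩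
        exact ⟨p.perm, hp, rfl⟩
    have hinj : Function.Injective (FinPerm.mk n) := fun π π' h => by simpa using h
    rw [← himage, Set.ncard_image_of_injective _ hinj, Nat.card_coe_set_eq]

theorem isAlgebraicOverQx_genFun {C : ∀ n, Set (Perm n)} (hC : IsPermClass C)
    (hfin : FinitelyManySimples C) {P : FinPerm → Prop}
    (hP : IsFirstOrder (ι := Empty) fun p _ => P p) :
    IsAlgebraicOverQx (genFun fun n => {π | π ∈ C n ∧ P ⟨n, π⟩}) := by
  have hset : {p : FinPerm | 0 < p.len ∧ p.perm ∈ C p.len ∧ P p} =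
      {p ∈ {p : FinPerm | p.perm ∈ C p.len} | 0 < p.len ∧ P p} :=
    Set.ext fun _ => and_left_comm
  rw [genFun_eq_sizeGenFun]
  obtain ⟨Q, hQ, hQ₀⟩ := isAlgebraic_sizeGenFun (k := ℚ) (isLowerSet_of_isPermClass hC)
    (finite_simples_of_finitelyManySimples hfin) hP
  exact ⟨Q, hQ, hset ▸ hQ₀⟩

end FinPerm

/-- If `C` is a permutation class containing only finitely many simple permutations,
then for any finite set `B₁` of blocked permutations and any finite set `B₂` of barred
permutations, the generating function of the set of permutations in `C` avoiding every
element of `B₁` and every element of `B₂` is algebraic over `ℚ[x]`. -/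
theorem statement4 (C : ∀ n, Set (Perm n)) (hC : IsPermClass C)
    (hfin : FinitelyManySimples C)
    (B₁ : Set (Σ k : ℕ, Perm k × Set ℕ)) (hB₁ : B₁.Finite)
    (hB₁D : ∀ b ∈ B₁, ∀ s ∈ b.2.2, 1 ≤ s ∧ s + 1 ≤ b.1)
    (B₂ : Set (Σ k : ℕ, Perm k × Set (Fin k))) (hB₂ : B₂.Finite) :
    IsAlgebraicOverQx (genFun fun n =>
      {π : Perm n | π ∈ C n ∧ (∀ b ∈ B₁, ¬ ContainsBlocked π b.2.1 b.2.2) ∧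
        ∀ b ∈ B₂, AvoidsBarred π b.2.1 b.2.2}) := by
  have := hB₁.to_subtype
  have := hB₂.to_subtype
  have hfirst : FinPerm.IsFirstOrder (ι := Empty) fun p _ =>
      (∀ b : B₁, ¬ ContainsBlocked p.perm b.1.2.1 b.1.2.2) ∧
        ∀ b : B₂, AvoidsBarred p.perm b.1.2.1 b.1.2.2 :=
    .and (.forall_finite fun b => (FinPerm.isFirstOrder_containsBlocked b.1.2.1 b.1.2.2).not)
      (.forall_finite fun b => FinPerm.isFirstOrder_avoidsBarred b.1.2.1 b.1.2.2)
  simpa only [Subtype.forall] using FinPerm.isAlgebraicOverQx_genFun hC hfin hfirst
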